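/- arXiv:2601.01133 — 6 statements merged into one kernel-verified Lean document; each statement's English description precedes it below -/
import Mathlib

section
/- Let G be a finite group such that the difference graph D(G) has at least one vertex. Then the domination number of D(G) equals 1 if and only if G is a Φ-group. Moreover, if the domination number of D(G) is 1, then the unique dominating set of size one is {u}, where u is the unique involution of G that commutes with at least one element of odd prime order. -/
/-- Adjacency in the difference of the enhanced power graph and the power graph:
`⟨x, y⟩` is cyclic but neither of `x`, `y` is a power of the other. -/
def diffAdj {G : Type*} [Group G] (x y : G) : Prop :=
  IsCyclic (Subgroup.closure ({x, y} : Set G)) ∧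
    (¬ ∃ k : ℤ, y = x ^ k) ∧ (¬ ∃ k : ℤ, x = y ^ k)

/-- The vertex set of the difference graph `𝒟(G)`: the elements of `G` that are
non-isolated in the difference of the enhanced power graph and the power graph. -/
abbrev DiffVertex (G : Type*) [Group G] := {x : G // ∃ y, diffAdj x y}

/-- The difference graph `𝒟(G)` of a group `G`. -/
def diffGraph (G : Type*) [Group G] : SimpleGraph (DiffVertex G) :=
  SimpleGraph.fromRel (fun a b => diffAdj a.val b.val)

/-- A dominating set of a graph: every vertex is in `S` or adjacent to a vertex of `S`. -/
def IsDominatingSet {V : Type*} (Γ : SimpleGraph V) (S : Set V) : Prop :=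
  ∀ v : V, v ∈ S ∨ ∃ u ∈ S, Γ.Adj u v

/-- The domination number of a graph: the least size of a dominating set. -/
noncomputable def dominationNumber {V : Type*} (Γ : SimpleGraph V) : ℕ :=
  sInf {n : ℕ | ∃ S : Set V, IsDominatingSet Γ S ∧ S.ncard = n}

/-- A maximal cyclic subgroup: a cyclic subgroup not properly contained in
another cyclic subgroup. -/
def IsMaxCyclic {G : Type*} [Group G] (C : Subgroup G) : Prop :=
  IsCyclic C ∧ ∀ D : Subgroup G, IsCyclic D → C ≤ D → C = D

/-- A `Φ`-group: (a) there is a unique involution `u` commuting with some element of odd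
prime order; (b) every non-trivial element of odd order generates a maximal cyclic
subgroup, or lies only in cyclic subgroups of prime-power order, or has prime order and
commutes with `u`; (c) every element `g ≠ u` of even order generates a maximal cyclic
subgroup or lies only in cyclic subgroups of prime-power order. -/
def IsPhiGroup (G : Type*) [Group G] : Prop :=
  ∃ u : G,
    (orderOf u = 2 ∧ ∃ g : G, Commute u g ∧ (orderOf g).Prime ∧ Odd (orderOf g)) ∧
    (∀ w : G, orderOf w = 2 →
      (∃ g : G, Commute w g ∧ (orderOf g).Prime ∧ Odd (orderOf g)) → w = u) ∧
    (∀ g : G, g ≠ 1 → Odd (orderOf g) →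
      IsMaxCyclic (Subgroup.zpowers g) ∨
      (∀ C : Subgroup G, IsCyclic C → g ∈ C → IsPrimePow (Nat.card C)) ∨
      ((orderOf g).Prime ∧ Commute g u)) ∧
    (∀ g : G, g ≠ u → Even (orderOf g) →
      IsMaxCyclic (Subgroup.zpowers g) ∨
      (∀ C : Subgroup G, IsCyclic C → g ∈ C → IsPrimePow (Nat.card C)))

theorem aux_mem_of_dvd {G : Type*} [Group G] [Finite G] {d x y : G}
    (hx : x ∈ Subgroup.zpowers d) (hy : y ∈ Subgroup.zpowers d)
    (h : orderOf x ∣ orderOf y) : x ∈ Subgroup.zpowers y := by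
  rw [← mem_powers_iff_mem_zpowers] at hx hy
  obtain ⟨a, rfl⟩ := hx
  obtain ⟨b, rfl⟩ := hy
  simp only at h ⊢
  have h1 : (d ^ a) ^ orderOf (d ^ b) = 1 := orderOf_dvd_iff_pow_eq_one.1 h
  rw [← pow_mul] at h1
  have h2 := orderOf_dvd_of_pow_eq_one h1
  have h3 : orderOf d = (orderOf d).gcd b * orderOf (d ^ b) := by
    rw [orderOf_pow, Nat.mul_div_cancel' (Nat.gcd_dvd_left _ _)]
  have h4 : (orderOf d).gcd b ∣ a := by
    have h5 : (orderOf d).gcd b * orderOf (d ^ b) ∣ a * orderOf (d ^ b) := h3 ▸ h2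
    exact Nat.dvd_of_mul_dvd_mul_right (orderOf_pos _) h5
  obtain ⟨c, hc⟩ := h4
  have h6 : d ^ ((orderOf d).gcd b) ∈ Subgroup.zpowers (d ^ b) := by
    refine ⟨(orderOf d).gcdB b, ?_⟩
    simp only
    rw [← zpow_natCast d ((orderOf d).gcd b), Nat.gcd_eq_gcd_ab, zpow_add, zpow_mul, zpow_mul,
      zpow_natCast, zpow_natCast, pow_orderOf_eq_one, one_zpow, one_mul]
  rw [hc, pow_mul]
  exact Subgroup.pow_mem _ h6 c

theorem aux_cyc_iff {G : Type*} [Group G] (x y : G) :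
    IsCyclic (Subgroup.closure ({x, y} : Set G)) ↔
      ∃ d, x ∈ Subgroup.zpowers d ∧ y ∈ Subgroup.zpowers d := by
  constructor
  · intro h
    obtain ⟨d, hd⟩ := (Subgroup.isCyclic_iff_exists_zpowers_eq_top _).1 h
    exact ⟨d, hd ▸ Subgroup.subset_closure (by simp), hd ▸ Subgroup.subset_closure (by simp)⟩
  · rintro ⟨d, hx, hy⟩
    refine Subgroup.isCyclic_of_le (H' := Subgroup.zpowers d) ?_
    rw [Subgroup.closure_le]
    rintro z (rfl | rfl)
    · exact hx
    · exact hy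

theorem aux_adj_iff {G : Type*} [Group G] [Finite G] (x y : G) :
    diffAdj x y ↔ (∃ d, x ∈ Subgroup.zpowers d ∧ y ∈ Subgroup.zpowers d) ∧
      ¬ orderOf y ∣ orderOf x ∧ ¬ orderOf x ∣ orderOf y := by
  unfold diffAdj
  rw [aux_cyc_iff]
  refine and_congr_right ?_
  rintro ⟨d, hx, hy⟩
  refine and_congr (not_congr ⟨?_, ?_⟩) (not_congr ⟨?_, ?_⟩)
  · rintro ⟨k, rfl⟩; exact orderOf_dvd_of_mem_zpowers ⟨k, rfl⟩
  · intro h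
    obtain ⟨k, hk⟩ := aux_mem_of_dvd hy hx h
    exact ⟨k, hk.symm⟩
  · rintro ⟨k, rfl⟩; exact orderOf_dvd_of_mem_zpowers ⟨k, rfl⟩
  · intro h
    obtain ⟨k, hk⟩ := aux_mem_of_dvd hx hy h
    exact ⟨k, hk.symm⟩

theorem aux_left {G : Type*} [Group G] {x y : G} (h : Commute x y)
    (hc : (orderOf x).Coprime (orderOf y)) : x ∈ Subgroup.zpowers (x * y) := by
  obtain ⟨k, hk1, hk2⟩ := Nat.chineseRemainder hc 1 0
  have : (x * y) ^ k = x := by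
    rw [h.mul_pow, pow_eq_pow_iff_modEq.2 hk1, pow_eq_pow_iff_modEq.2 hk2]; simp
  have h2 : (x * y) ^ k ∈ Subgroup.zpowers (x * y) := Subgroup.npow_mem_zpowers _ _
  rwa [this] at h2

theorem aux_cop {G : Type*} [Group G] {x y : G} (h : Commute x y)
    (hc : (orderOf x).Coprime (orderOf y)) :
    ∃ d, x ∈ Subgroup.zpowers d ∧ y ∈ Subgroup.zpowers d :=
  ⟨x * y, aux_left h hc, h.eq ▸ aux_left h.symm hc.symm⟩

theorem aux_comm {G : Type*} [Group G] {d x y : G}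
    (hx : x ∈ Subgroup.zpowers d) (hy : y ∈ Subgroup.zpowers d) : Commute x y := by
  obtain ⟨a, rfl⟩ := hx
  obtain ⟨b, rfl⟩ := hy
  exact Commute.zpow_zpow_self d a b

theorem aux_dvd {G : Type*} [Group G] {d x : G}
    (hx : x ∈ Subgroup.zpowers d) : orderOf x ∣ orderOf d := by
  obtain ⟨a, rfl⟩ := hx
  exact orderOf_dvd_of_mem_zpowers ⟨a, rfl⟩

theorem aux_exists_order {G : Type*} [Group G] [Finite G] (d : G) {n : ℕ} (h : n ∣ orderOf d) :
    ∃ y ∈ Subgroup.zpowers d, orderOf y = n :=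
  ⟨d ^ (orderOf d / n), Subgroup.npow_mem_zpowers _ _,
    orderOf_pow_orderOf_div (orderOf_pos d).ne' h⟩

/-- characterization of the vertices -/
theorem aux_vertex_iff {G : Type*} [Group G] [Finite G] (x : G) :
    (∃ y, diffAdj x y) ↔ x ≠ 1 ∧ ¬ IsMaxCyclic (Subgroup.zpowers x) ∧
      ¬ (∀ C : Subgroup G, IsCyclic C → x ∈ C → IsPrimePow (Nat.card C)) := by
  constructor
  · rintro ⟨y, hy⟩
    rw [aux_adj_iff] at hy
    obtain ⟨⟨d, hx, hy⟩, h1, h2⟩ := hy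
    refine ⟨?_, ?_, ?_⟩
    · rintro rfl; simp at h2
    · rintro ⟨-, h⟩
      have := h (Subgroup.zpowers d) inferInstance (by simpa using hx)
      rw [← this] at hy
      exact h1 (aux_dvd hy)
    · intro h
      have h3 := h (Subgroup.zpowers d) inferInstance hx
      rw [Nat.card_zpowers] at h3
      obtain ⟨p, k, hp, -, hk⟩ := (isPrimePow_nat_iff _).1 h3
      obtain ⟨a, -, ha⟩ := (Nat.dvd_prime_pow hp).1 (hk ▸ aux_dvd hx)
      obtain ⟨b, -, hb⟩ := (Nat.dvd_prime_pow hp).1 (hk ▸ aux_dvd hy)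
      rw [ha, hb] at h1 h2
      rcases le_total a b with hab | hab
      · exact h2 (pow_dvd_pow p hab)
      · exact h1 (pow_dvd_pow p hab)
  · rintro ⟨h1, h2, h3⟩
    by_cases hpp : IsPrimePow (orderOf x)
    · push Not at h3
      obtain ⟨C, hC, hxC, hn⟩ := h3
      obtain ⟨d, rfl⟩ := (Subgroup.isCyclic_iff_exists_zpowers_eq_top C).1 hC
      rw [Nat.card_zpowers] at hn
      obtain ⟨p, k, hp, hk0, hk⟩ := (isPrimePow_nat_iff _).1 hpp
      have hpd : p ∣ orderOf d := (dvd_pow_self p hk0.ne').trans (hk ▸ aux_dvd hxC)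
      have : ∃ q : ℕ, q.Prime ∧ q ∣ orderOf d ∧ q ≠ p := by
        by_contra! hcon
        exact hn (isPrimePow_iff_unique_prime_dvd.2 ⟨p, ⟨hp, hpd⟩, fun q hq => hcon q hq.1 hq.2⟩)
      obtain ⟨q, hq, hqd, hqp⟩ := this
      obtain ⟨y, hy, hyo⟩ := aux_exists_order d hqd
      refine ⟨y, (aux_adj_iff _ _).2 ⟨⟨d, hxC, hy⟩, ?_, ?_⟩⟩
      · rw [hyo, ← hk]
        intro h
        exact hqp ((Nat.prime_dvd_prime_iff_eq hq hp).1 (hq.dvd_of_dvd_pow h))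
      · rw [hyo, ← hk]
        intro h
        exact hqp ((Nat.prime_dvd_prime_iff_eq hp hq).1
          ((dvd_pow_self p hk0.ne').trans h)).symm
    · have : ∃ d, x ∈ Subgroup.zpowers d ∧ d ∉ Subgroup.zpowers x := by
        by_contra! hcon
        refine h2 ⟨inferInstance, fun D hD hxD => ?_⟩
        obtain ⟨d, rfl⟩ := (Subgroup.isCyclic_iff_exists_zpowers_eq_top D).1 hD
        rw [Subgroup.zpowers_le] at hxD
        refine le_antisymm (by simpa using hxD) (by simpa using hcon d hxD)
      obtain ⟨d, hxd, hdx⟩ := this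
      have hnd : ¬ orderOf d ∣ orderOf x := fun h =>
        hdx (aux_mem_of_dvd (Subgroup.mem_zpowers d) hxd h)
      rw [Nat.dvd_iff_prime_pow_dvd_dvd] at hnd
      push Not at hnd
      obtain ⟨p, k, hp, hk, hk2⟩ := hnd
      obtain ⟨y, hy, hyo⟩ := aux_exists_order d hk
      refine ⟨y, (aux_adj_iff _ _).2 ⟨⟨d, hxd, hy⟩, ?_, ?_⟩⟩
      · rwa [hyo]
      · rw [hyo]
        intro h
        obtain ⟨a, -, ha⟩ := (Nat.dvd_prime_pow hp).1 h
        apply hpp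
        rw [ha]
        refine hp.isPrimePow.pow ?_
        rintro rfl
        simp at ha
        exact h1 ha

theorem aux_symm {G : Type*} [Group G] {x y : G} (h : diffAdj x y) : diffAdj y x := by
  unfold diffAdj at *
  rw [Set.pair_comm]
  exact ⟨h.1, h.2.2, h.2.1⟩

theorem aux_gadj {G : Type*} [Group G] [Finite G] (a b : DiffVertex G) :
    (diffGraph G).Adj a b ↔ diffAdj a.val b.val := by
  unfold diffGraph
  rw [SimpleGraph.fromRel_adj]
  constructor
  · rintro ⟨-, h | h⟩
    · exact h
    · exact aux_symm h
  · intro h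
    refine ⟨?_, Or.inl h⟩
    rintro rfl
    exact h.2.1 ⟨1, by simp⟩

/-- dominating vertex -/
def auxDom {G : Type*} [Group G] (u : G) : Prop :=
  (∃ y, diffAdj u y) ∧ ∀ v : G, (∃ y, diffAdj v y) → v ≠ u → diffAdj u v

theorem aux_dom_set {G : Type*} [Group G] [Finite G] (S : Set (DiffVertex G))
    (hS : IsDominatingSet (diffGraph G) S) (h1 : S.ncard = 1) :
    ∃ u : G, auxDom u ∧ Subtype.val '' S = {u} := by
  obtain ⟨u, rfl⟩ := Set.ncard_eq_one.1 h1
  refine ⟨u.1, ⟨u.2, fun v hv hne => ?_⟩, by simp⟩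
  rcases hS ⟨v, hv⟩ with h | ⟨w, hw, h⟩
  · exact absurd (congrArg Subtype.val h) hne
  · rw [aux_gadj] at h
    rw [Set.mem_singleton_iff] at hw
    subst hw
    exact h

theorem aux_domnum {G : Type*} [Group G] [Finite G] (hne : Nonempty (DiffVertex G)) :
    dominationNumber (diffGraph G) = 1 ↔ ∃ u : G, auxDom u := by
  unfold dominationNumber
  constructor
  · intro h
    have := Nat.sInf_mem (Nat.nonempty_of_sInf_eq_succ h)
    rw [h] at this
    obtain ⟨S, hS, h1⟩ := this
    obtain ⟨u, hu, -⟩ := aux_dom_set S hS h1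
    exact ⟨u, hu⟩
  · rintro ⟨u, hu, hd⟩
    apply le_antisymm
    · apply Nat.sInf_le
      refine ⟨{⟨u, hu⟩}, fun v => ?_, Set.ncard_singleton _⟩
      by_cases hv : v.1 = u
      · left; exact Subtype.ext hv
      · right
        exact ⟨_, rfl, (aux_gadj _ _).2 (hd v.1 v.2 hv)⟩
    · apply le_csInf
      · exact ⟨_, Set.univ, fun v => Or.inl trivial, rfl⟩
      · rintro n ⟨S, hS, rfl⟩
        rw [Nat.one_le_iff_ne_zero]
        intro h0
        rw [Set.ncard_eq_zero] at h0
        subst h0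
        obtain ⟨v⟩ := hne
        rcases hS v with h | ⟨_, h, _⟩ <;> exact h

theorem aux_cop2 {n : ℕ} (h : Odd n) : (2 : ℕ).Coprime n := by
  simpa using h

theorem aux_inv {G : Type*} [Group G] [Finite G] {w g : G} (hw : orderOf w = 2)
    (hc : Commute w g) (hg : g ≠ 1) (ho : Odd (orderOf g)) : diffAdj w g := by
  rw [aux_adj_iff]
  refine ⟨aux_cop hc (hw ▸ aux_cop2 ho), ?_, ?_⟩
  · intro h
    have := Nat.eq_one_of_dvd_coprimes (aux_cop2 ho) (hw ▸ h) dvd_rfl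
    exact hg (orderOf_eq_one_iff.1 this)
  · rw [hw]
    intro h
    exact (Nat.not_even_iff_odd.2 ho) (even_iff_two_dvd.2 h)

theorem aux_dom_props {G : Type*} [Group G] [Finite G] {u : G} (hu : auxDom u) :
    (orderOf u = 2 ∧ ∃ g : G, Commute u g ∧ (orderOf g).Prime ∧ Odd (orderOf g)) ∧
    (∀ w : G, orderOf w = 2 →
      (∃ g : G, Commute w g ∧ (orderOf g).Prime ∧ Odd (orderOf g)) → w = u) := by
  obtain ⟨⟨y, hy⟩, hd⟩ := hu
  have hu1 : u ≠ 1 := ((aux_vertex_iff u).1 ⟨y, hy⟩).1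
  have ho : orderOf u = 2 := by
    have hinv : u⁻¹ = u := by
      by_contra hne
      have hv : ∃ z, diffAdj u⁻¹ z := by
        refine ⟨y, ?_⟩
        rw [aux_adj_iff] at hy ⊢
        simpa using hy
      have := (aux_adj_iff _ _).1 (hd _ hv hne)
      simp at this
    apply orderOf_eq_prime _ hu1
    rw [pow_two]
    nth_rewrite 1 [← hinv]
    simp
  refine ⟨⟨ho, ?_⟩, ?_⟩
  · rw [aux_adj_iff, ho] at hy
    obtain ⟨⟨d, hud, hyd⟩, h1, h2⟩ := hy
    have hy1 : orderOf y ≠ 1 := fun h => h1 (h ▸ one_dvd _)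
    obtain ⟨p, hp, hpy⟩ := Nat.exists_prime_and_dvd hy1
    obtain ⟨g, hg, hgo⟩ := aux_exists_order y hpy
    refine ⟨g, aux_comm hud ?_, hgo ▸ hp, ?_⟩
    · exact (Subgroup.zpowers_le.2 hyd) hg
    · rw [hgo]
      rw [← Nat.not_even_iff_odd, even_iff_two_dvd]
      exact fun h => h2 (h.trans hpy)
  · rintro w hw ⟨g, hc, hp, hodd⟩
    by_contra hne
    have hg1 : g ≠ 1 := by rintro rfl; simp [Nat.not_prime_one] at hp
    have := (aux_adj_iff _ _).1 (hd w ⟨g, aux_inv hw hc hg1 hodd⟩ hne)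
    rw [hw, ho] at this
    simp at this

theorem aux_dom_phi {G : Type*} [Group G] [Finite G] {u : G} (hu : auxDom u) :
    IsPhiGroup G := by
  obtain ⟨h1, h2⟩ := aux_dom_props hu
  refine ⟨u, h1, h2, ?_, ?_⟩
  · intro g hg ho
    by_contra! hcon
    obtain ⟨hA, hB, hC⟩ := hcon
    have hgu : g ≠ u := by
      rintro rfl
      rw [h1.1] at ho
      exact absurd ho (by decide)
    have hadj := hu.2 g ((aux_vertex_iff g).2 ⟨hg, hA, by push Not; exact hB⟩) hgu
    obtain ⟨⟨d, hud, hgd⟩, -, -⟩ := (aux_adj_iff _ _).1 hadj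
    have hcomm : Commute g u := aux_comm hgd hud
    have hnp : ¬ (orderOf g).Prime := fun h => hC h hcomm
    have hg1 : orderOf g ≠ 1 := fun h => hg (orderOf_eq_one_iff.1 h)
    obtain ⟨p, hp, hpg⟩ := Nat.exists_prime_and_dvd hg1
    obtain ⟨h, hh, hho⟩ := aux_exists_order g hpg
    have hodd : Odd (orderOf h) := by rw [hho]; exact Odd.of_dvd_nat ho hpg
    have hcu : Commute h u := aux_comm ((Subgroup.zpowers_le.2 hgd) hh) hud
    have hcop : ∀ {z : G}, Odd (orderOf z) → (orderOf z).Coprime (orderOf u) := fun hz => by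
      rw [h1.1]; exact (aux_cop2 hz).symm
    have hhu : orderOf (h * u) = p * 2 := by
      rw [hcu.orderOf_mul_eq_mul_orderOf_of_coprime (hcop hodd), hho, h1.1]
    have hgu' : orderOf (g * u) = orderOf g * 2 := by
      rw [hcomm.orderOf_mul_eq_mul_orderOf_of_coprime (hcop ho), h1.1]
    have hgin : g ∈ Subgroup.zpowers (g * u) := aux_left hcomm (hcop ho)
    have huin : u ∈ Subgroup.zpowers (g * u) := hcomm.eq ▸ aux_left hcomm.symm (hcop ho).symm
    have hgin2 : h * u ∈ Subgroup.zpowers (g * u) :=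
      Subgroup.mul_mem _ ((Subgroup.zpowers_le.2 hgin) hh) huin
    have hv : ∃ y, diffAdj (h * u) y := by
      refine ⟨g, (aux_adj_iff _ _).2 ⟨⟨g * u, hgin2, hgin⟩, ?_, ?_⟩⟩
      · rw [hhu]
        intro hdiv
        have : orderOf g ∣ p := (aux_cop2 ho).symm.dvd_of_dvd_mul_right hdiv
        rcases (Nat.dvd_prime hp).1 this with h | h
        · exact hg1 h
        · exact hnp (h ▸ hp)
      · rw [hhu]
        intro hdiv
        exact (Nat.not_even_iff_odd.2 ho) (even_iff_two_dvd.2 ((dvd_mul_left 2 p).trans hdiv))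
    have hne : h * u ≠ u := by
      intro he
      rw [he, h1.1] at hhu
      have := hp.two_le
      omega
    have hadj2 := (aux_adj_iff _ _).1 (hu.2 _ hv hne)
    rw [hhu, h1.1] at hadj2
    exact hadj2.2.2 (dvd_mul_left 2 p)
  · intro g hgu he
    by_contra! hcon
    obtain ⟨hA, hB⟩ := hcon
    have hg : g ≠ 1 := by rintro rfl; simp at he
    have hadj := hu.2 g ((aux_vertex_iff g).2 ⟨hg, hA, by push Not; exact hB⟩) hgu
    have := ((aux_adj_iff _ _).1 hadj).2.2
    rw [h1.1] at this
    exact this (even_iff_two_dvd.1 he)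

theorem aux_phi_dom {G : Type*} [Group G] [Finite G] (h : IsPhiGroup G) :
    ∃ u : G, auxDom u := by
  obtain ⟨u, ⟨h1, g, hc, hp, ho⟩, h2, h3, h4⟩ := h
  refine ⟨u, ⟨g, aux_inv h1 hc (by rintro rfl; simp [Nat.not_prime_one] at hp) ho⟩, fun v hv hne => ?_⟩
  obtain ⟨hv1, hA, hB⟩ := (aux_vertex_iff v).1 hv
  rcases Nat.even_or_odd (orderOf v) with he | hodd
  · rcases h4 v hne he with h | h
    · exact absurd h hA
    · exact absurd h hB
  · rcases h3 v hv1 hodd with h | h | h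
    · exact absurd h hA
    · exact absurd h hB
    · exact aux_inv h1 h.2.symm hv1 hodd

/-- Theorem 3.3: for a finite group `G` whose difference graph has at least one vertex,
`γ(𝒟(G)) = 1` iff `G` is a `Φ`-group; moreover, in that case the unique dominating set
of size one is `{u}`, where `u` is the unique involution commuting with at least one
element of odd prime order. -/
theorem domination_number_eq_one_iff_phiGroup
    (G : Type*) [Group G] [Finite G] (hne : Nonempty (DiffVertex G)) :
    (dominationNumber (diffGraph G) = 1 ↔ IsPhiGroup G) ∧
    (dominationNumber (diffGraph G) = 1 →
      ∃ u : G,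
        (orderOf u = 2 ∧ ∃ g : G, Commute u g ∧ (orderOf g).Prime ∧ Odd (orderOf g)) ∧
        (∀ w : G, orderOf w = 2 →
          (∃ g : G, Commute w g ∧ (orderOf g).Prime ∧ Odd (orderOf g)) → w = u) ∧
        (∀ S : Set (DiffVertex G), IsDominatingSet (diffGraph G) S → S.ncard = 1 →
          Subtype.val '' S = {u})) := by
  constructor
  · rw [aux_domnum hne]
    exact ⟨fun ⟨u, hu⟩ => aux_dom_phi hu, aux_phi_dom⟩
  · intro h
    obtain ⟨u, hu⟩ := (aux_domnum hne).1 h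
    obtain ⟨h1, h2⟩ := aux_dom_props hu
    refine ⟨u, h1, h2, fun S hS hS1 => ?_⟩
    obtain ⟨v, hv, hSv⟩ := aux_dom_set S hS hS1
    obtain ⟨h3, -⟩ := aux_dom_props hv
    rw [hSv, h2 v h3.1 h3.2]
end

section
/- Let G be a finite abelian group such that the difference graph D(G) has at least one vertex. Then the domination number of D(G) equals 1 if and only if G is isomorphic to Z_2 × (Z_q)^n, where q is an odd prime and n is a positive integer. -/
theorem aux_vec' (q : ℕ) [Fact q.Prime] (V : Type*) [AddCommGroup V] [Finite V] [Nontrivial V]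
    [Module (ZMod q) V] : ∃ n : ℕ, 0 < n ∧ Nonempty (V ≃+ (Fin n → ZMod q)) := by
  have hfin : Module.Finite (ZMod q) V := Module.Finite.of_finite
  exact ⟨Module.finrank (ZMod q) V, Module.finrank_pos,
    ⟨(Module.finBasis (ZMod q) V).equivFun.toAddEquiv⟩⟩

theorem aux_vec (q : ℕ) [Fact q.Prime] (V : Type*) [AddCommGroup V] [Finite V] [Nontrivial V]
    (h : ∀ v : V, q • v = 0) : ∃ n : ℕ, 0 < n ∧ Nonempty (V ≃+ (Fin n → ZMod q)) :=
  @aux_vec' q _ V _ _ _ (AddCommGroup.zmodModule h)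

theorem aux_mem_zpowers {C : Type*} [CommGroup C] [Finite C] [IsCyclic C] (a b : C)
    (h : orderOf a ∣ orderOf b) : a ∈ Subgroup.zpowers b := by
  have hle : Subgroup.zpowers b ≤ (powMonoidHom (orderOf b) : C →* C).ker := by
    rw [Subgroup.zpowers_le, MonoidHom.mem_ker, powMonoidHom_apply, pow_orderOf_eq_one]
  have hcard : Nat.card (powMonoidHom (orderOf b) : C →* C).ker ≤ Nat.card (Subgroup.zpowers b) := by
    rw [IsCyclic.card_powMonoidHom_ker, Nat.card_zpowers]
    exact Nat.gcd_le_right _ (orderOf_pos b)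
  rw [Subgroup.eq_of_le_of_card_ge hle hcard, MonoidHom.mem_ker, powMonoidHom_apply]
  exact orderOf_dvd_iff_pow_eq_one.mp h

theorem aux_mem {G : Type*} [CommGroup G] [Finite G] (a b : G)
    (hc : IsCyclic (Subgroup.closure ({a, b} : Set G)))
    (h : orderOf a ∣ orderOf b) : ∃ k : ℤ, a = b ^ k := by
  have ha : a ∈ Subgroup.closure ({a, b} : Set G) := Subgroup.subset_closure (by simp)
  have hb : b ∈ Subgroup.closure ({a, b} : Set G) := Subgroup.subset_closure (by simp)
  have := aux_mem_zpowers (⟨a, ha⟩ : Subgroup.closure ({a, b} : Set G)) ⟨b, hb⟩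
    (by simpa [Subgroup.orderOf_mk] using h)
  obtain ⟨k, hk⟩ := Subgroup.mem_zpowers_iff.mp this
  exact ⟨k, by simpa using (congrArg Subtype.val hk).symm⟩

theorem aux_adj {G : Type*} [CommGroup G] (a b c : G)
    (ha : a ∈ Subgroup.zpowers c) (hb : b ∈ Subgroup.zpowers c)
    (h1 : ¬ orderOf a ∣ orderOf b) (h2 : ¬ orderOf b ∣ orderOf a) : diffAdj a b := by
  refine ⟨?_, ?_, ?_⟩
  · have hle : Subgroup.closure ({a, b} : Set G) ≤ Subgroup.zpowers c := by
      rw [Subgroup.closure_le]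
      rintro z (rfl | rfl)
      · exact ha
      · exact hb
    exact isCyclic_of_injective (Subgroup.inclusion hle) (Subgroup.inclusion_injective hle)
  · rintro ⟨k, rfl⟩
    exact h2 (orderOf_dvd_of_mem_zpowers (Subgroup.zpow_mem_zpowers a k))
  · rintro ⟨k, rfl⟩
    exact h1 (orderOf_dvd_of_mem_zpowers (Subgroup.zpow_mem_zpowers b k))

theorem aux_adj_symm {G : Type*} [Group G] {a b : G} (h : diffAdj a b) : diffAdj b a := by
  refine ⟨?_, h.2.2, h.2.1⟩
  rw [Set.pair_comm]; exact h.1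

theorem aux_dom {G : Type*} [CommGroup G] [Finite G] (hne : Nonempty (DiffVertex G)) :
    dominationNumber (diffGraph G) = 1 ↔
      ∃ x : G, (∃ y, diffAdj x y) ∧ ∀ v : G, (∃ w, diffAdj v w) → v ≠ x → diffAdj x v := by
  constructor
  · intro h
    have hn : {n : ℕ | ∃ S : Set (DiffVertex G), IsDominatingSet (diffGraph G) S ∧
        S.ncard = n}.Nonempty := by
      by_contra hcon
      rw [Set.not_nonempty_iff_eq_empty] at hcon
      rw [dominationNumber, hcon] at h
      simp at h
    have hm := Nat.sInf_mem hn
    change dominationNumber (diffGraph G) ∈ _ at hm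
    rw [h] at hm
    obtain ⟨S, hS, hc⟩ := hm
    obtain ⟨x, rfl⟩ := Set.ncard_eq_one.mp hc
    refine ⟨x.1, x.2, fun v hv hvx => ?_⟩
    rcases hS ⟨v, hv⟩ with h1 | ⟨u, hu, h1⟩
    · exact absurd (congrArg Subtype.val (Set.mem_singleton_iff.mp h1)) hvx
    · rw [Set.mem_singleton_iff] at hu
      subst hu
      rw [diffGraph, SimpleGraph.fromRel_adj] at h1
      rcases h1.2 with h2 | h2
      · exact h2
      · exact aux_adj_symm h2
  · rintro ⟨x, hx, hdom⟩
    have h1 : 1 ∈ {n : ℕ | ∃ S : Set (DiffVertex G), IsDominatingSet (diffGraph G) S ∧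
        S.ncard = n} := by
      refine ⟨{⟨x, hx⟩}, fun v => ?_, Set.ncard_singleton _⟩
      by_cases hv : v = ⟨x, hx⟩
      · exact Or.inl hv
      · refine Or.inr ⟨⟨x, hx⟩, rfl, ?_⟩
        rw [diffGraph, SimpleGraph.fromRel_adj]
        exact ⟨fun e => hv e.symm, Or.inl (hdom v.1 v.2 (fun e => hv (Subtype.ext e)))⟩
    have hle : dominationNumber (diffGraph G) ≤ 1 := Nat.sInf_le h1
    have hm : dominationNumber (diffGraph G) ∈ _ := Nat.sInf_mem ⟨1, h1⟩
    obtain ⟨S, hS, hc⟩ := hm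
    rcases Nat.le_one_iff_eq_zero_or_eq_one.mp hle with h0 | h0
    · rw [h0, Set.ncard_eq_zero] at hc
      subst hc
      obtain ⟨v⟩ := hne
      rcases hS v with h | ⟨u, hu, _⟩
      · exact absurd h (Set.notMem_empty _)
      · exact absurd hu (Set.notMem_empty _)
    · exact h0

theorem aux_back {G : Type*} [CommGroup G] [Finite G] (hne : Nonempty (DiffVertex G))
    (x : G) (q : ℕ) (hq : q.Prime) (hodd : Odd q) (hx1 : x ≠ 1) (hx2 : x ^ 2 = 1)
    (hexp : ∀ g : G, (g ^ q) ^ 2 = 1) (hu : ∀ g : G, g ^ 2 = 1 → g = 1 ∨ g = x) :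
    ∃ x : G, (∃ y, diffAdj x y) ∧ ∀ v : G, (∃ w, diffAdj v w) → v ≠ x → diffAdj x v := by
  have hxo : orderOf x = 2 := orderOf_eq_prime_iff.mpr ⟨hx2, hx1⟩
  have hxq : x ^ q = x := by
    obtain ⟨k, rfl⟩ := hodd
    rw [pow_succ, pow_mul, hx2, one_pow, one_mul]
  have key : ∀ v : G, (∃ w, diffAdj v w) → v ≠ x → diffAdj x v := by
    rintro v ⟨w, hw⟩ hvx
    have hv1 : v ≠ 1 := by
      rintro rfl
      exact hw.2.2 ⟨0, by simp⟩
    rcases hu _ (hexp v) with h | h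
    · have hvo : orderOf v = q := orderOf_eq_prime_iff (hp := ⟨hq⟩) |>.mpr ⟨h, hv1⟩
      refine aux_adj x v (x * v) ⟨q, ?_⟩ ⟨q + 1, ?_⟩ ?_ ?_
      · simp [mul_pow, h, hxq]
      · have : (x * v) ^ (q + 1) = v := by
          rw [mul_pow, pow_succ, pow_succ, hxq, h, one_mul, ← pow_two, hx2, one_mul]
        simpa only [← zpow_natCast, Nat.cast_add, Nat.cast_one] using this
      · rw [hxo, hvo]
        intro hd
        obtain ⟨k, rfl⟩ := hodd
        omega
      · rw [hxo, hvo]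
        intro hd
        rcases (Nat.dvd_prime Nat.prime_two).mp hd with rfl | rfl
        · exact hq.one_lt.ne rfl
        · exact absurd hodd (by decide)
    · exfalso
      have h2 : 2 ∣ orderOf v := by
        rw [← hxo, ← h]; exact orderOf_pow_dvd q
      have hq' : q ∣ orderOf v := by
        by_contra hcon
        have hd : orderOf v ∣ q * 2 := by
          rw [orderOf_dvd_iff_pow_eq_one, pow_mul]; exact hexp v
        have hc : Nat.Coprime (orderOf v) q := ((Nat.Prime.coprime_iff_not_dvd hq).mpr hcon).symm
        have := hc.dvd_of_dvd_mul_left hd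
        rcases hu v (orderOf_dvd_iff_pow_eq_one.mp this) with h | h
        · exact hv1 h
        · exact hvx h
      have hcop : Nat.Coprime q 2 := hodd.coprime_two_right
      have hd : orderOf w ∣ orderOf v := by
        refine dvd_trans ?_ (hcop.mul_dvd_of_dvd_of_dvd hq' h2)
        rw [orderOf_dvd_iff_pow_eq_one, pow_mul]; exact hexp w
      exact hw.2.1 (aux_mem w v (aux_adj_symm hw).1 hd)
  refine ⟨x, ?_, key⟩
  obtain ⟨v, hv⟩ := hne
  by_cases hvx : v = x
  · exact hvx ▸ hv
  · exact ⟨v, key v hv hvx⟩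

theorem aux_fwd {G : Type*} [CommGroup G] [Finite G]
    (x : G) (hx : ∃ y, diffAdj x y)
    (hdom : ∀ v : G, (∃ w, diffAdj v w) → v ≠ x → diffAdj x v) :
    ∃ q : ℕ, q.Prime ∧ Odd q ∧ x ≠ 1 ∧ x ^ 2 = 1 ∧ (∃ y : G, orderOf y = q) ∧
    (∀ g : G, (g ^ q) ^ 2 = 1) ∧ (∀ g : G, g ^ 2 = 1 → g = 1 ∨ g = x) := by
  obtain ⟨y, hy⟩ := hx
  have hx1 : x ≠ 1 := by
    rintro rfl
    exact hy.2.2 ⟨0, by simp⟩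
  have hxinv : x⁻¹ = x := by
    by_contra hcon
    have hv : diffAdj x⁻¹ y := by
      have hxy := hy
      obtain ⟨h1, h2, h3⟩ := hxy
      refine ⟨?_, ?_, ?_⟩
      · have hle : Subgroup.closure ({x⁻¹, y} : Set G) ≤ Subgroup.closure ({x, y} : Set G) := by
          rw [Subgroup.closure_le]
          rintro z (rfl | rfl)
          · exact inv_mem (Subgroup.subset_closure (by simp))
          · exact Subgroup.subset_closure (by simp)
        exact isCyclic_of_injective (Subgroup.inclusion hle) (Subgroup.inclusion_injective hle)
      · rintro ⟨k, hk⟩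
        exact h2 ⟨-k, by rw [hk]; simp⟩
      · rintro ⟨k, hk⟩
        exact h3 ⟨-k, by rw [zpow_neg, ← hk, inv_inv]⟩
    exact (hdom _ ⟨y, hv⟩ hcon).2.1 ⟨-1, by simp⟩
  have hx2 : x ^ 2 = 1 := by
    rw [pow_two]; nth_rewrite 1 [← hxinv]; simp
  have hxo : orderOf x = 2 := orderOf_eq_prime_iff.mpr ⟨hx2, hx1⟩
  -- vertices of even order equal x
  have hev : ∀ v w : G, diffAdj v w → 2 ∣ orderOf v → v = x := by
    intro v w hvw h2
    by_contra hcon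
    have h := hdom v ⟨w, hvw⟩ hcon
    exact h.2.2 (aux_mem x v h.1 (hxo ▸ h2))
  have hy1 : y ≠ 1 := by
    rintro rfl
    exact hy.2.1 ⟨0, by simp⟩
  have hyodd : ¬ 2 ∣ orderOf y := by
    intro h
    have := hev y x (aux_adj_symm hy) h
    exact hy.2.1 ⟨1, by simpa using this⟩
  obtain ⟨q, hq, hqd⟩ := Nat.exists_prime_and_dvd (n := orderOf y)
    (fun h => hy1 (orderOf_eq_one_iff.mp h))
  have hq2 : q ≠ 2 := by
    rintro rfl; exact hyodd hqd
  have hodd : Odd q := hq.odd_of_ne_two hq2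
  have h2q : ¬ 2 ∣ q := by
    obtain ⟨k, rfl⟩ := hodd
    omega
  have hq2' : ¬ q ∣ 2 := fun h => hq2 ((Nat.prime_dvd_prime_iff_eq hq Nat.prime_two).mp h)
  have hz : orderOf (y ^ (orderOf y / q)) = q := orderOf_pow_orderOf_div (orderOf_pos y).ne' hqd
  generalize y ^ (orderOf y / q) = z at hz
  have hzq : z ^ q = 1 := hz ▸ pow_orderOf_eq_one z
  -- exponent
  obtain ⟨c, hc⟩ := Monoid.exists_orderOf_eq_exponent (Monoid.ExponentExists.of_finite (G := G))
  have hcmp : ∀ d e : ℕ, d ∣ orderOf c → e ∣ orderOf c → 2 ∣ d → d ≠ 2 → ¬ d ∣ e → ¬ e ∣ d →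
      False := by
    intro d e hd he h2 hd2 h1 h3
    have ho := (orderOf_pos c).ne'
    have ha := orderOf_pow_orderOf_div ho hd
    have hb := orderOf_pow_orderOf_div ho he
    have := hev _ _ (aux_adj (c ^ (orderOf c / d)) (c ^ (orderOf c / e)) c
      (Subgroup.npow_mem_zpowers _ _) (Subgroup.npow_mem_zpowers _ _)
      (by rwa [ha, hb]) (by rwa [ha, hb])) (by rwa [ha])
    rw [this, hxo] at ha
    exact hd2 ha.symm
  have h2c : 2 ∣ orderOf c := by rw [hc, ← hxo]; exact Monoid.order_dvd_exponent x
  have hqc : q ∣ orderOf c := by rw [hc, ← hz]; exact Monoid.order_dvd_exponent z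
  have hcop : Nat.Coprime 2 q := hodd.coprime_two_left
  have h4 : ¬ 4 ∣ orderOf c := by
    intro h4
    refine hcmp 4 q h4 hqc (by norm_num) (by norm_num) (fun h => h2q (dvd_trans (by norm_num) h)) ?_
    intro h
    exact hq2' (hq.dvd_of_dvd_pow (show q ∣ 2 ^ 2 from h))
  have hce : orderOf c ∣ q * 2 := by
    obtain ⟨m, hm⟩ := h2c
    have hm2 : ¬ 2 ∣ m := by
      rintro ⟨k, rfl⟩; exact h4 ⟨k, by omega⟩
    by_contra hcon
    refine hcmp (2 * q) m (hcop.mul_dvd_of_dvd_of_dvd ⟨m, hm⟩ hqc) ⟨2, by omega⟩ ⟨q, rfl⟩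
      (fun h => hq.one_lt.ne (by omega)) (fun h => hm2 (dvd_trans ⟨q, rfl⟩ h)) ?_
    intro h
    apply hcon
    rw [hm, mul_comm q]
    apply Nat.mul_dvd_mul_left
    exact (Nat.Coprime.dvd_of_dvd_mul_left
      ((Nat.Prime.coprime_iff_not_dvd Nat.prime_two).mpr hm2).symm h)
  refine ⟨q, hq, hodd, hx1, hx2, ⟨z, hz⟩, ?_, ?_⟩
  · intro g
    rw [← pow_mul]
    exact orderOf_dvd_iff_pow_eq_one.mp
      (dvd_trans (hc ▸ Monoid.order_dvd_exponent g) hce)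
  · intro g hg
    by_contra! hcon
    have hgo : orderOf g = 2 := orderOf_eq_prime_iff.mpr ⟨hg, hcon.1⟩
    have hgq : g ^ q = g := by
      obtain ⟨k, rfl⟩ := hodd
      rw [pow_succ, pow_mul, hg, one_pow, one_mul]
    refine hcon.2 (hev g z (aux_adj g z (g * z) ⟨q, ?_⟩ ⟨q + 1, ?_⟩ ?_ ?_) (by rw [hgo]))
    · simp [mul_pow, hzq, hgq]
    · have : (g * z) ^ (q + 1) = z := by
        rw [mul_pow, pow_succ, pow_succ, hgq, hzq, one_mul, ← pow_two, hg, one_mul]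
      simpa only [← zpow_natCast, Nat.cast_add, Nat.cast_one] using this
    · rwa [hgo, hz]
    · rwa [hgo, hz]

theorem aux_iso {G : Type*} [CommGroup G] [Finite G]
    (x : G) (q : ℕ) (hq : q.Prime) (hodd : Odd q) (hx1 : x ≠ 1) (hx2 : x ^ 2 = 1)
    (hz : ∃ y : G, orderOf y = q)
    (hexp : ∀ g : G, (g ^ q) ^ 2 = 1) (hu : ∀ g : G, g ^ 2 = 1 → g = 1 ∨ g = x) :
    ∃ n : ℕ, 0 < n ∧
        Nonempty (G ≃* (Multiplicative (ZMod 2) × (Fin n → Multiplicative (ZMod q)))) := by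
  have hxo : orderOf x = 2 := orderOf_eq_prime_iff.mpr ⟨hx2, hx1⟩
  have : Fact q.Prime := ⟨hq⟩
  let H : Subgroup G := (powMonoidHom q : G →* G).ker
  have hH : ∀ g : G, g ∈ H ↔ g ^ q = 1 := fun g => by
    rw [MonoidHom.mem_ker, powMonoidHom_apply]
  have hnt : Nontrivial (Additive H) := by
    obtain ⟨y, hy⟩ := hz
    have hyH : y ∈ H := (hH y).mpr (hy ▸ pow_orderOf_eq_one y)
    exact ⟨Additive.ofMul ⟨y, hyH⟩, 0, fun h => by
      have h1 : (⟨y, hyH⟩ : H) = 1 := h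
      have h2 : y = 1 := congrArg Subtype.val h1
      rw [h2, orderOf_one] at hy
      exact hq.one_lt.ne hy⟩
  obtain ⟨n, hnpos, ⟨e⟩⟩ := aux_vec q (Additive H) (by
    intro g
    have := (hH g.toMul.1).mp g.toMul.2
    apply Additive.toMul.injective
    apply Subtype.ext
    simpa using this)
  let e1 : H ≃* (Fin n → Multiplicative (ZMod q)) :=
    { toFun := fun h i => Multiplicative.ofAdd (e (Additive.ofMul h) i)
      invFun := fun f => (e.symm (fun i => (f i).toAdd)).toMul
      left_inv := fun h => by simp
      right_inv := fun f => by
        funext i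
        simp
      map_mul' := fun a b => by
        funext i
        simp }
  have e2 : Subgroup.zpowers x ≃* Multiplicative (ZMod 2) :=
    mulEquivOfPrimeCardEq (p := 2) (by rw [Nat.card_zpowers, hxo]) (by simp)
  let f : Subgroup.zpowers x × H →* G :=
    MonoidHom.coprod (Subgroup.zpowers x).subtype H.subtype
  have hf : ∀ a b, f (a, b) = a.1 * b.1 := fun a b => by simp [f]
  have hbij : Function.Bijective f := by
    constructor
    · rw [injective_iff_map_eq_one]
      rintro ⟨⟨a, ha⟩, ⟨b, hb⟩⟩ h
      rw [hf] at h
      simp only at h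
      have ha2 : a ^ 2 = 1 := by
        obtain ⟨k, rfl⟩ := ha
        simp only
        rw [← zpow_natCast, zpow_comm, zpow_natCast, hx2, one_zpow]
      have hb' := (hH b).mp hb
      have haq : a ^ q = a := by
        obtain ⟨k, rfl⟩ := hodd
        rw [pow_succ, pow_mul, ha2, one_pow, one_mul]
      have h' := congrArg (· ^ q) h
      simp only [mul_pow, hb', haq, mul_one, one_pow] at h'
      subst h'
      rw [one_mul] at h
      subst h
      rfl
    · intro g
      have h1 : g ^ q ∈ Subgroup.zpowers x := by
        rcases hu _ (hexp g) with h | h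
        · rw [h]; exact one_mem _
        · rw [h]; exact Subgroup.mem_zpowers x
      have h2 : (g ^ (q - 1))⁻¹ ∈ H := by
        rw [hH, inv_pow, inv_eq_one, ← pow_mul, mul_comm, pow_mul]
        obtain ⟨k, hk⟩ := hodd
        rw [show q - 1 = 2 * k by omega, pow_mul, hexp, one_pow]
      refine ⟨(⟨_, h1⟩, ⟨_, h2⟩), ?_⟩
      rw [hf]
      simp only
      rw [mul_inv_eq_iff_eq_mul, ← pow_succ']
      congr 1
      have := hq.pos
      omega
  exact ⟨n, hnpos, ⟨(MulEquiv.ofBijective f hbij).symm.trans (MulEquiv.prodCongr e2 e1)⟩⟩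

/-- Corollary 3.5: for a finite abelian group `G` whose difference graph has at least one
vertex, `γ(𝒟(G)) = 1` iff `G ≅ ℤ₂ × (ℤ_q)ⁿ` for some odd prime `q` and some `n ≥ 1`. -/
theorem abelian_domination_number_eq_one_iff
    (G : Type u) [CommGroup G] [Finite G] (hne : Nonempty (DiffVertex G)) :
    dominationNumber (diffGraph G) = 1 ↔
      ∃ (q n : ℕ), q.Prime ∧ Odd q ∧ 0 < n ∧
        Nonempty (G ≃* (Multiplicative (ZMod 2) × (Fin n → Multiplicative (ZMod q)))) := by
  rw [aux_dom hne]
  constructor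
  · rintro ⟨x, hx, hdom⟩
    obtain ⟨q, hq, hodd, hx1, hx2, hz, hexp, hu⟩ := aux_fwd x hx hdom
    obtain ⟨n, hn, e⟩ := aux_iso x q hq hodd hx1 hx2 hz hexp hu
    exact ⟨q, n, hq, hodd, hn, e⟩
  · rintro ⟨q, n, hq, hodd, hn, ⟨e⟩⟩
    have h2all : ∀ a : Multiplicative (ZMod 2), a ^ 2 = 1 := by decide
    have hqall : ∀ b : Fin n → Multiplicative (ZMod q), b ^ q = 1 := by
      intro b
      funext i
      apply Multiplicative.toAdd.injective
      simp
    refine aux_back hne (e.symm (Multiplicative.ofAdd 1, 1)) q hq hodd ?_ ?_ ?_ ?_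
    · intro h
      rw [MulEquiv.map_eq_one_iff, Prod.mk_eq_one] at h
      exact absurd h.1 (by decide)
    · rw [← map_pow, MulEquiv.map_eq_one_iff, Prod.pow_mk, h2all, one_pow]; rfl
    · intro g
      rw [← pow_mul, ← MulEquiv.map_eq_one_iff e, map_pow]
      ext1
      · rw [Prod.pow_fst, mul_comm, pow_mul, h2all, one_pow]; rfl
      · rw [Prod.pow_snd, pow_mul, hqall, one_pow]; rfl
    · intro g hg
      rw [← MulEquiv.map_eq_one_iff e, MulEquiv.eq_symm_apply]
      have hg' : (e g) ^ 2 = 1 := by rw [← map_pow, hg, map_one]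
      generalize e g = p at hg'
      obtain ⟨a, b⟩ := p
      have hb2 : b ^ 2 = 1 := congrArg Prod.snd hg'
      have hb : b = 1 := by
        have := hqall b
        obtain ⟨k, hk⟩ := hodd
        have h3 : b ^ q = b ^ (2 * k + 1) := congrArg (fun m : ℕ => b ^ m) hk
        rw [h3, pow_succ, pow_mul, hb2, one_pow, one_mul] at this
        exact this
      subst hb
      have : ∀ a : Multiplicative (ZMod 2), a = 1 ∨ a = Multiplicative.ofAdd 1 := by decide
      rcases this a with rfl | rfl
      · exact Or.inl rfl
      · exact Or.inr rfl
end

section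
/- Let n ≥ 3 be a positive integer that is not a prime power, and let D_{2n} be the dihedral group of order 2n. Then the diameter of the difference graph D(D_{2n}) equals 2 if n is square-free, and equals 3 otherwise. -/
def inc (d e : ℕ) : Prop := ¬ d ∣ e ∧ ¬ e ∣ d

lemma inc.symm' {d e : ℕ} (h : inc d e) : inc e d := ⟨h.2, h.1⟩

lemma exists_other_prime {n : ℕ} (hn : 3 ≤ n) (hpp : ¬ IsPrimePow n) (p : ℕ) (hp : p.Prime) :
    ∃ q, q.Prime ∧ q ∣ n ∧ q ≠ p := by
  by_contra! h
  apply hpp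
  rw [isPrimePow_iff_unique_prime_dvd]
  obtain ⟨q, hq, hqn⟩ := Nat.exists_prime_and_dvd (show n ≠ 1 by omega)
  have := h q hq hqn
  subst this
  exact ⟨q, ⟨hq, hqn⟩, fun y hy => h y hy.1 hy.2⟩

lemma num_sqfree {n d e : ℕ} (hsq : Squarefree n) (hde : d ∣ e) (hen : e ∣ n)
    (he : e ≠ n) (hd : d ≠ 1) : ∃ f, f ∣ n ∧ inc d f ∧ inc f e := by
  obtain ⟨c, rfl⟩ := hen
  have hc : c ≠ 1 := by rintro rfl; simp at he
  obtain ⟨p, hp, hpc⟩ := Nat.exists_prime_and_dvd hc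
  have hpe : ¬ p ∣ e := fun h => by
    have := hsq p (mul_dvd_mul h hpc)
    exact hp.one_lt.ne' (Nat.isUnit_iff.1 this)
  have key : ∀ x, x ∣ e → x ≠ 1 → ¬ x ∣ p := fun x hx h1 h => by
    rcases (Nat.dvd_prime hp).1 h with h | h
    · exact h1 h
    · exact hpe (h ▸ hx)
  refine ⟨p, hpc.mul_left e, ⟨key d hde hd, fun h => hpe (h.trans hde)⟩, hpe, key e dvd_rfl ?_⟩
  rintro rfl
  exact hd (Nat.dvd_one.1 hde)

lemma num_gen {n d e : ℕ} (hn : 3 ≤ n) (hpp : ¬ IsPrimePow n) (hde : d ∣ e) (hen : e ∣ n)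
    (he : e ≠ n) (hd : d ≠ 1) : (∃ f, f ∣ n ∧ inc d f ∧ inc f e) ∨
      ∃ f g, f ∣ n ∧ g ∣ n ∧ inc d f ∧ inc f g ∧ inc g e := by
  have h1 : ¬ n ∣ e := fun h => he (Nat.dvd_antisymm hen h)
  rw [Nat.dvd_iff_prime_pow_dvd_dvd] at h1
  push Not at h1
  obtain ⟨p, a, hp, hpn, hpe⟩ := h1
  obtain ⟨q, hq, hqn, hqp⟩ := exists_other_prime hn hpp p hp
  have ha : a ≠ 0 := by rintro rfl; simp at hpe
  have hqpow : ∀ k, ¬ q ∣ p ^ k := fun k h =>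
    hqp ((Nat.prime_dvd_prime_iff_eq hq hp).1 (hq.dvd_of_dvd_pow h))
  have hpowq : ∀ x, x ≠ 1 → x ∣ p ^ a → inc x q := fun x hx h => by
    refine ⟨fun h2 => ?_, fun h2 => hqpow a (h2.trans h)⟩
    rcases (Nat.dvd_prime hq).1 h2 with h3 | h3
    · exact hx h3
    · exact hqpow a (h3 ▸ h)
  have he1 : e ≠ 1 := by rintro rfl; exact hd (Nat.dvd_one.1 hde)
  by_cases hdp : d ∣ p ^ a
  · by_cases hep : e ∣ p ^ a
    · exact Or.inl ⟨q, hqn, hpowq d hd hdp, (hpowq e he1 hep).symm'⟩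
    · refine Or.inr ⟨q, p ^ a, hqn, hpn, hpowq d hd hdp, (hpowq _ ?_ dvd_rfl).symm', hpe, hep⟩
      intro h
      rw [h] at hpe
      exact hpe (one_dvd _)
  · exact Or.inl ⟨p ^ a, hpn, ⟨hdp, fun h => hpe (h.trans hde)⟩, hpe, fun h => hdp (hde.trans h)⟩

lemma num_vertex {n d : ℕ} (hn : 3 ≤ n) (hpp : ¬ IsPrimePow n) (hen : d ∣ n)
    (he : d ≠ n) (hd : d ≠ 1) : ∃ f, f ∣ n ∧ inc d f := by
  rcases num_gen hn hpp dvd_rfl hen he hd with ⟨f, h1, h2, -⟩ | ⟨f, g, h1, -, h2, -⟩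
  · exact ⟨f, h1, h2⟩
  · exact ⟨f, h1, h2⟩

open DihedralGroup

lemma r_power_iff {n : ℕ} [NeZero n] (i j : ZMod n) :
    (∃ k : ℤ, (r j : DihedralGroup n) = (r i) ^ k) ↔
      orderOf (r j : DihedralGroup n) ∣ orderOf (r i : DihedralGroup n) := by
  constructor
  · rintro ⟨k, hk⟩
    exact orderOf_dvd_of_mem_zpowers ⟨k, hk.symm⟩
  · intro h
    rw [orderOf_r, orderOf_r] at h
    have h2 : n.gcd i.val ∣ n.gcd j.val := by
      have hn0 : 0 < n := Nat.pos_of_ne_zero (NeZero.ne n)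
      obtain ⟨c, hc⟩ := h
      have e1 := Nat.div_mul_cancel (Nat.gcd_dvd_left n i.val)
      have e2 := Nat.div_mul_cancel (Nat.gcd_dvd_left n j.val)
      have hpos : 0 < n / n.gcd j.val :=
        Nat.div_pos (Nat.gcd_le_left _ hn0) (Nat.gcd_pos_of_pos_left _ hn0)
      refine ⟨c, Nat.eq_of_mul_eq_mul_left hpos ?_⟩
      rw [hc] at e1
      calc _ = n := by rw [mul_comm, mul_comm, e2]
        _ = _ := by rw [mul_comm _ c, ← mul_assoc]; exact e1.symm
    obtain ⟨c, hc⟩ := h2.trans (Nat.gcd_dvd_right n j.val)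
    have hb := congrArg (Int.cast : ℤ → ZMod n) (Nat.gcd_eq_gcd_ab n i.val)
    push_cast at hb
    rw [ZMod.natCast_self, zero_mul, zero_add, ZMod.natCast_zmod_val] at hb
    have hj := congrArg (Nat.cast : ℕ → ZMod n) hc
    push_cast at hj
    rw [ZMod.natCast_zmod_val, hb] at hj
    refine ⟨n.gcdB i.val * c, ?_⟩
    rw [r_zpow, hj]
    push_cast
    ring_nf

lemma diffAdj_r_iff {n : ℕ} [NeZero n] (i j : ZMod n) :
    diffAdj (r i : DihedralGroup n) (r j) ↔
      inc (orderOf (r i : DihedralGroup n)) (orderOf (r j : DihedralGroup n)) := by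
  unfold diffAdj inc
  rw [r_power_iff, r_power_iff]
  have : IsCyclic (Subgroup.closure ({r i, r j} : Set (DihedralGroup n))) := by
    have hle : Subgroup.closure ({r i, r j} : Set (DihedralGroup n)) ≤
        Subgroup.zpowers (r 1) := by
      rw [Subgroup.closure_le]
      have : ∀ i : ZMod n, (r i : DihedralGroup n) ∈ Subgroup.zpowers (r 1 : DihedralGroup n) :=
        fun i => ⟨i.val, by simp⟩
      rintro x (rfl | rfl)
      · exact this _
      · exact this _
    exact isCyclic_of_injective (Subgroup.inclusion hle) (Subgroup.inclusion_injective hle)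
  tauto

lemma not_diffAdj_sr {n : ℕ} (i : ZMod n) (y : DihedralGroup n) : ¬ diffAdj (sr i) y := by
  rintro ⟨hc, h1, -⟩
  rw [Subgroup.isCyclic_iff_exists_zpowers_eq_top] at hc
  obtain ⟨g, hg⟩ := hc
  have m1 : sr i ∈ Subgroup.zpowers g := hg ▸ Subgroup.subset_closure (by simp)
  have m2 : y ∈ Subgroup.zpowers g := hg ▸ Subgroup.subset_closure (by simp)
  obtain ⟨k, hk⟩ := m1
  obtain ⟨m, hm⟩ := m2
  rcases g with j | j
  · simp at hk
  · have h2 : (sr j : DihedralGroup n) ^ (2 : ℤ) = 1 := by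
      rw [zpow_ofNat, sq, sr_mul_self]
    rcases Int.even_or_odd' k with ⟨l, hl | hl⟩
    · simp only [hl, zpow_mul, h2, one_zpow] at hk
      rw [one_def] at hk
      cases hk
    · simp only [hl, zpow_add, zpow_mul, h2, one_zpow, one_mul, zpow_one] at hk
      exact h1 ⟨m, by rw [← hk]; exact hm.symm⟩

lemma exists_order {n : ℕ} [NeZero n] {d : ℕ} (hd : d ∣ n) :
    ∃ i : ZMod n, orderOf (r i : DihedralGroup n) = d := by
  refine ⟨((n / d : ℕ) : ZMod n), ?_⟩
  rw [← r_one_pow, orderOf_pow, orderOf_r_one, Nat.gcd_eq_right (Nat.div_dvd_of_dvd hd)]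
  exact Nat.div_div_self hd (NeZero.ne n)

lemma r_order_dvd {n : ℕ} [NeZero n] (i : ZMod n) : orderOf (r i : DihedralGroup n) ∣ n := by
  rw [orderOf_r]; exact Nat.div_dvd_of_dvd (Nat.gcd_dvd_left _ _)

lemma vertex_r {n : ℕ} [NeZero n] (v : DiffVertex (DihedralGroup n)) :
    ∃ i, v.1 = r i := by
  obtain ⟨x | x, y, hy⟩ := v
  · exact ⟨x, rfl⟩
  · exact absurd hy (not_diffAdj_sr _ _)

lemma adj_iff {n : ℕ} [NeZero n] (u v : DiffVertex (DihedralGroup n)) :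
    (diffGraph (DihedralGroup n)).Adj u v ↔ inc (orderOf u.1) (orderOf v.1) := by
  obtain ⟨i, hi⟩ := vertex_r u
  obtain ⟨j, hj⟩ := vertex_r v
  unfold diffGraph
  rw [SimpleGraph.fromRel_adj, hi, hj, diffAdj_r_iff, diffAdj_r_iff]
  constructor
  · rintro ⟨-, h | h⟩
    · exact h
    · exact h.symm'
  · intro h
    refine ⟨?_, Or.inl h⟩
    rintro rfl
    rw [hi] at hj
    rw [hj] at h
    exact h.1 dvd_rfl

lemma vertex_order {n : ℕ} [NeZero n] (v : DiffVertex (DihedralGroup n)) :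
    orderOf v.1 ∣ n ∧ orderOf v.1 ≠ n ∧ orderOf v.1 ≠ 1 := by
  obtain ⟨i, hi⟩ := vertex_r v
  obtain ⟨y, hy⟩ := v.2
  rw [hi] at hy ⊢
  rcases y with j | j
  · rw [diffAdj_r_iff] at hy
    refine ⟨r_order_dvd i, fun h => ?_, fun h => ?_⟩
    · exact hy.2 (by rw [h]; exact r_order_dvd j)
    · exact hy.1 (h ▸ one_dvd _)
  · obtain ⟨h1, h2, h3⟩ := hy
    exfalso
    apply not_diffAdj_sr j (r i)
    exact ⟨by rw [Set.pair_comm]; exact h1, h3, h2⟩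

lemma vertex_of_elem {n : ℕ} [NeZero n] (hn : 3 ≤ n) (hpp : ¬ IsPrimePow n) (i : ZMod n)
    (he : orderOf (r i : DihedralGroup n) ≠ n) (h1 : orderOf (r i : DihedralGroup n) ≠ 1) :
    ∃ y, diffAdj (r i : DihedralGroup n) y := by
  obtain ⟨f, hf, hi⟩ := num_vertex hn hpp (r_order_dvd i) he h1
  obtain ⟨j, rfl⟩ := exists_order hf
  exact ⟨r j, (diffAdj_r_iff i j).2 hi⟩

lemma vertex_of_inc {n : ℕ} [NeZero n] {d f : ℕ} (hd : d ∣ n) (hf : f ∣ n) (h : inc d f) :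
    ∃ v : DiffVertex (DihedralGroup n), orderOf v.1 = d := by
  obtain ⟨i, rfl⟩ := exists_order hd
  obtain ⟨j, rfl⟩ := exists_order hf
  exact ⟨⟨r i, r j, (diffAdj_r_iff i j).2 h⟩, rfl⟩

lemma edist_two {V : Type*} {G : SimpleGraph V} {u v w : V} (h1 : G.Adj u v) (h2 : G.Adj v w) :
    G.edist u w ≤ 2 :=
  G.edist_le (.cons h1 (.cons h2 .nil))

lemma edist_three {V : Type*} {G : SimpleGraph V} {u v w x : V} (h1 : G.Adj u v)
    (h2 : G.Adj v w) (h3 : G.Adj w x) : G.edist u x ≤ 3 :=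
  G.edist_le (.cons h1 (.cons h2 (.cons h3 .nil)))

lemma edist_le_of_dvd {n : ℕ} [NeZero n] (k : ℕ∞) (hk : 1 ≤ k)
    (h : ∀ u v : DiffVertex (DihedralGroup n), orderOf u.1 ∣ orderOf v.1 →
      (diffGraph (DihedralGroup n)).edist u v ≤ k) :
    (diffGraph (DihedralGroup n)).ediam ≤ k := by
  rw [SimpleGraph.ediam_le_iff]
  intro u v
  by_cases h1 : orderOf u.1 ∣ orderOf v.1
  · exact h u v h1
  by_cases h2 : orderOf v.1 ∣ orderOf u.1
  · rw [SimpleGraph.edist_comm]; exact h v u h2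
  rw [SimpleGraph.edist_eq_one_iff_adj.2 ((adj_iff u v).2 ⟨h1, h2⟩)]
  exact hk

lemma upper_sq {n : ℕ} [NeZero n] (hsq : Squarefree n) :
    (diffGraph (DihedralGroup n)).ediam ≤ 2 := by
  refine edist_le_of_dvd 2 (by norm_num) fun u v huv => ?_
  obtain ⟨f, hf, h1, h2⟩ := num_sqfree hsq huv (vertex_order v).1 (vertex_order v).2.1
    (vertex_order u).2.2
  obtain ⟨w, rfl⟩ := vertex_of_inc hf (vertex_order v).1 h2
  exact edist_two ((adj_iff _ _).2 h1) ((adj_iff _ _).2 h2)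

lemma upper_gen {n : ℕ} [NeZero n] (hn : 3 ≤ n) (hpp : ¬ IsPrimePow n) :
    (diffGraph (DihedralGroup n)).ediam ≤ 3 := by
  refine edist_le_of_dvd 3 (by norm_num) fun u v huv => ?_
  rcases num_gen hn hpp huv (vertex_order v).1 (vertex_order v).2.1
    (vertex_order u).2.2 with ⟨f, hf, h1, h2⟩ | ⟨f, g, hf, hg, h1, h2, h3⟩
  · obtain ⟨w, rfl⟩ := vertex_of_inc hf (vertex_order v).1 h2
    exact (edist_two ((adj_iff _ _).2 h1) ((adj_iff _ _).2 h2)).trans (by norm_num)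
  · obtain ⟨w, rfl⟩ := vertex_of_inc hf hg h2
    obtain ⟨x, rfl⟩ := vertex_of_inc hg (vertex_order v).1 h3
    exact edist_three ((adj_iff _ _).2 h1) ((adj_iff _ _).2 h2) ((adj_iff _ _).2 h3)

lemma lower_two {n : ℕ} [NeZero n] (hn : 3 ≤ n) (hpp : ¬ IsPrimePow n) :
    2 ≤ (diffGraph (DihedralGroup n)).ediam := by
  obtain ⟨p, hp, hpn, hp2⟩ := exists_other_prime hn hpp 2 Nat.prime_two
  obtain ⟨i, hi⟩ := exists_order hpn
  have hpne : p ≠ n := by rintro rfl; exact hpp hp.isPrimePow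
  have hi' : orderOf (r (-i) : DihedralGroup n) = p := by
    rw [← inv_r, orderOf_inv, hi]
  let u : DiffVertex (DihedralGroup n) :=
    ⟨r i, vertex_of_elem hn hpp i (hi ▸ hpne) (hi ▸ hp.one_lt.ne')⟩
  let v : DiffVertex (DihedralGroup n) :=
    ⟨r (-i), vertex_of_elem hn hpp (-i) (hi' ▸ hpne) (hi' ▸ hp.one_lt.ne')⟩
  by_contra hlt
  have hle : (diffGraph (DihedralGroup n)).edist u v ≤ 1 := by
    have : (diffGraph (DihedralGroup n)).edist u v < 2 :=
      lt_of_le_of_lt SimpleGraph.edist_le_ediam (not_le.1 hlt)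
    exact Order.le_of_lt_add_one (by rwa [one_add_one_eq_two])
  rcases SimpleGraph.edist_le_one_iff_adj_or_eq.1 hle with h | h
  · rw [adj_iff] at h
    apply h.1
    change orderOf (r i : DihedralGroup n) ∣ orderOf (r (-i) : DihedralGroup n)
    rw [hi, hi']
  · have h3 : (r i : DihedralGroup n) = (r i)⁻¹ := congrArg Subtype.val h
    have h4 : (r i : DihedralGroup n) ^ 2 = 1 := by
      rw [sq]; nth_rewrite 2 [h3]; exact mul_inv_cancel _
    have h5 := orderOf_dvd_of_pow_eq_one h4
    rw [hi] at h5
    exact hp2 ((Nat.prime_dvd_prime_iff_eq hp Nat.prime_two).1 h5)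

lemma lower_three {n : ℕ} [NeZero n] (hn : 3 ≤ n) (hpp : ¬ IsPrimePow n)
    (hsq : ¬ Squarefree n) : 3 ≤ (diffGraph (DihedralGroup n)).ediam := by
  rw [Nat.squarefree_iff_prime_squarefree] at hsq
  push Not at hsq
  obtain ⟨p, hp, m, hm⟩ := hsq
  have hpn : p ∣ n := ⟨p * m, by rw [hm]; ring⟩
  have hen : p * m ∣ n := ⟨p, by rw [hm]; ring⟩
  have hpne : p ≠ n := by rintro rfl; exact hpp hp.isPrimePow
  have hn0 := NeZero.ne n
  have hene : p * m ≠ n := by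
    intro h
    have h2 : p * (p * m) = n := by rw [hm]; ring
    rw [h] at h2
    have := hp.two_le
    nlinarith
  have he1 : p * m ≠ 1 := fun h => hp.one_lt.ne' (Nat.eq_one_of_mul_eq_one_right h)
  obtain ⟨f, hf, hf'⟩ := num_vertex hn hpp hpn hpne hp.one_lt.ne'
  obtain ⟨g, hg, hg'⟩ := num_vertex hn hpp hen hene he1
  obtain ⟨u, hu⟩ := vertex_of_inc hpn hf hf'
  obtain ⟨v, hv⟩ := vertex_of_inc hen hg hg'
  have key : 2 < (diffGraph (DihedralGroup n)).edist u v := by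
    rw [SimpleGraph.two_lt_edist_iff]
    refine ⟨?_, ?_, ?_⟩
    · rintro rfl
      rw [hu] at hv
      have hm1 : m = 1 := by
        have := hp.pos
        nlinarith
      apply hpp
      rw [hm, hm1, mul_one, ← sq]
      exact hp.isPrimePow.pow two_ne_zero
    · rw [adj_iff, hu, hv]
      exact fun h => h.1 (dvd_mul_right _ _)
    · rw [Set.eq_empty_iff_forall_notMem]
      intro w hw
      rw [SimpleGraph.mem_commonNeighbors, adj_iff, adj_iff, hu, hv] at hw
      obtain ⟨⟨h1, -⟩, -, h2⟩ := hw
      have hc : Nat.Coprime (orderOf w.1) p := ((Nat.Prime.coprime_iff_not_dvd hp).2 h1).symm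
      apply h2
      apply hc.dvd_of_dvd_mul_left
      have h3 := (vertex_order w).1
      have h4 : p * (p * m) = n := by rw [hm]; ring
      rw [h4]
      exact h3
  exact (Order.add_one_le_of_lt key).trans SimpleGraph.edist_le_ediam

/-- Corollary 4.3: for `n ≥ 3` not a prime power, the diameter of the difference graph of
the dihedral group of order `2n` is `2` if `n` is square-free and `3` otherwise. -/
theorem dihedral_diffGraph_diam
    (n : ℕ) (hn : 3 ≤ n) (hpp : ¬ IsPrimePow n) :
    (diffGraph (DihedralGroup n)).diam = if Squarefree n then 2 else 3 := by
  have : NeZero n := ⟨by omega⟩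
  unfold SimpleGraph.diam
  split_ifs with h
  · rw [le_antisymm (upper_sq h) (lower_two hn hpp)]; rfl
  · rw [le_antisymm (upper_gen hn hpp) (lower_three hn hpp h)]; rfl
end

section
/- Let p be a prime and let P be a finite non-cyclic p-group. If M₁, M₂, M₃ are three distinct maximal cyclic subgroups of P such that M₁ ≪ M₂ and M₂ ≪ M₃, then M₁ ≪ M₃. -/
/-- The domination relation on maximal cyclic subgroups of a `p`-group:
`M ≪ N` iff `p² ≤ |M| ≤ |N|` and `|M ∩ N| = |M| / p`. -/
def SubgroupDominated {G : Type*} [Group G] (p : ℕ) (M N : Subgroup G) : Prop :=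
  p ^ 2 ≤ Nat.card M ∧ Nat.card M ≤ Nat.card N ∧
    Nat.card ↥(M ⊓ N) = Nat.card M / p

theorem pow_card_eq_one_of_mem_aux {C : Type*} [Group C] (A : Subgroup C)
    {x : C} (hx : x ∈ A) : x ^ Nat.card A = 1 := by
  have := pow_card_eq_one' (x := (⟨x, hx⟩ : A))
  exact congrArg Subtype.val this

theorem le_of_card_dvd_aux {C : Type*} [Group C] [Finite C] [IsCyclic C] (A B : Subgroup C)
    (h : Nat.card A ∣ Nat.card B) : A ≤ B := by
  classical
  have := Fintype.ofFinite C
  have hB : (Finset.univ.filter (fun x : C => x ∈ B)) =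
      Finset.univ.filter (fun x : C => x ^ Nat.card B = 1) := by
    apply Finset.eq_of_subset_of_card_le
    · intro x hx
      simp only [Finset.mem_filter, Finset.mem_univ, true_and] at hx ⊢
      exact pow_card_eq_one_of_mem_aux B hx
    · refine (IsCyclic.card_pow_eq_one_le Nat.card_pos).trans ?_
      rw [Nat.card_eq_fintype_card, Fintype.card_subtype]
  intro x hx
  have hx1 : x ^ Nat.card B = 1 := by
    obtain ⟨k, hk⟩ := h
    rw [hk, pow_mul, pow_card_eq_one_of_mem_aux A hx, one_pow]
  have : x ∈ Finset.univ.filter (fun x : C => x ∈ B) := by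
    rw [hB]; simpa using hx1
  simpa using this

theorem le_of_card_dvd_aux2 {G : Type*} [Group G] [Finite G] (M A B : Subgroup G)
    (hM : IsCyclic M) (hA : A ≤ M) (hB : B ≤ M)
    (h : Nat.card A ∣ Nat.card B) : A ≤ B := by
  have h1 := Nat.card_congr (Subgroup.subgroupOfEquivOfLe hA).toEquiv
  have h2 := Nat.card_congr (Subgroup.subgroupOfEquivOfLe hB).toEquiv
  have := le_of_card_dvd_aux (A.subgroupOf M) (B.subgroupOf M) (by rw [h1, h2]; exact h)
  intro x hx
  exact this (show (⟨x, hA hx⟩ : M) ∈ A.subgroupOf M from hx)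

/-- Lemma 5.1: in a finite non-cyclic `p`-group, the domination relation on maximal
cyclic subgroups is transitive: if `M₁ ≪ M₂` and `M₂ ≪ M₃` for distinct maximal cyclic
subgroups `M₁, M₂, M₃`, then `M₁ ≪ M₃`. -/
theorem subgroupDominated_trans
    (p : ℕ) (hp : p.Prime) (P : Type*) [Group P] [Finite P]
    (hP : IsPGroup p P) (hnc : ¬ IsCyclic P)
    (M₁ M₂ M₃ : Subgroup P)
    (hM₁ : IsMaxCyclic M₁) (hM₂ : IsMaxCyclic M₂) (hM₃ : IsMaxCyclic M₃)
    (h12 : M₁ ≠ M₂) (h13 : M₁ ≠ M₃) (h23 : M₂ ≠ M₃)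
    (hd12 : SubgroupDominated p M₁ M₂) (hd23 : SubgroupDominated p M₂ M₃) :
    SubgroupDominated p M₁ M₃ := by
  have : Fact p.Prime := ⟨hp⟩
  obtain ⟨a, ha⟩ := (hP.to_subgroup M₁).exists_card_eq
  obtain ⟨b, hb⟩ := (hP.to_subgroup M₂).exists_card_eq
  obtain ⟨c, hc⟩ := (hP.to_subgroup (M₁ ⊓ M₃)).exists_card_eq
  obtain ⟨h1, h2, h3⟩ := hd12
  obtain ⟨k1, k2, k3⟩ := hd23
  refine ⟨h1, h2.trans k2, ?_⟩
  have hab : a ≤ b := (Nat.pow_le_pow_iff_right hp.one_lt).1 (by rw [← ha, ← hb]; exact h2)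
  have ha2 : 2 ≤ a := (Nat.pow_le_pow_iff_right hp.one_lt).1 (by rw [← ha]; exact h1)
  have e : ∀ n, 2 ≤ n → p ^ n / p = p ^ (n - 1) := fun n hn => by
    obtain ⟨m, rfl⟩ : ∃ m, n = m + 1 := ⟨n - 1, by omega⟩
    rw [pow_succ, Nat.mul_div_cancel _ hp.pos, Nat.add_sub_cancel]
  rw [ha, e a ha2] at h3
  rw [hb, e b (by omega)] at k3
  rw [ha, e a ha2, hc]
  have hle : M₁ ⊓ M₂ ≤ M₂ ⊓ M₃ := le_of_card_dvd_aux2 M₂ _ _ hM₂.1 inf_le_right inf_le_left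
    (by rw [h3, k3]; exact pow_dvd_pow p (by omega))
  have hle2 : M₁ ⊓ M₂ ≤ M₁ ⊓ M₃ := le_inf inf_le_left (hle.trans inf_le_right)
  have l1 := Subgroup.card_le_of_le hle2
  rw [h3, hc, Nat.pow_le_pow_iff_right hp.one_lt] at l1
  have l2 : c < a := by
    by_contra hca
    have : M₁ ⊓ M₃ = M₁ := Subgroup.eq_of_le_of_card_ge inf_le_left
      (by rw [ha, hc]; exact Nat.pow_le_pow_right hp.pos (by omega))
    exact h13 (hM₁.2 M₃ hM₃.1 (inf_eq_left.1 this))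
  congr 1
  omega
end

section
/- Let G be a finite non-cyclic nilpotent group whose order is not a prime power, written as G = P₁ × P₂ × ⋯ × P_t × Z_n where each P_i is a non-cyclic Sylow p_i-subgroup of G, the p_i are pairwise distinct primes, and p_i does not divide n for each i (possibly n = 1, in which case t ≥ 2). Then the set F(G) is a dominating set of the difference graph D(G). -/
/-- The set `𝒮'(P)`: maximal cyclic subgroups `C` with `|C| > p` such that no maximal
cyclic subgroup of strictly larger order dominates `C`. -/
def SPrime (p : ℕ) (P : Type*) [Group P] : Set (Subgroup P) :=
  {C | IsMaxCyclic C ∧ p < Nat.card C ∧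
    ¬ ∃ C' : Subgroup P, IsMaxCyclic C' ∧ Nat.card C < Nat.card C' ∧
      SubgroupDominated p C C'}

/-- The reflexive(-symmetric) closure `≡` of the domination relation; on `𝒮'(P)` the
domination relation is symmetric and this is an equivalence relation. -/
def PhiEquiv {P : Type*} [Group P] (p : ℕ) (C C' : Subgroup P) : Prop :=
  C = C' ∨ SubgroupDominated p C C' ∨ SubgroupDominated p C' C

/-- Admissible choices for the set `ℱ(P)` of a non-cyclic `p`-group `P`: if
`exp(P) = p`, a singleton `{x}` with `o(x) = p`; if `exp(P) > p`, a set
`{x₁, …, x_k}` such that `{⟨x₁⟩, …, ⟨x_k⟩}` is a system of representatives of the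
`≡`-classes of `𝒮'(P)`. -/
def IsAdmissibleF (p : ℕ) (P : Type*) [Group P] (F : Set P) : Prop :=
  (Monoid.exponent P = p ∧ ∃ x : P, orderOf x = p ∧ F = {x}) ∨
  (p < Monoid.exponent P ∧
    (∀ x ∈ F, Subgroup.zpowers x ∈ SPrime p P) ∧
    (∀ C ∈ SPrime p P, ∃ x ∈ F, PhiEquiv p C (Subgroup.zpowers x)) ∧
    (∀ x ∈ F, ∀ y ∈ F, PhiEquiv p (Subgroup.zpowers x) (Subgroup.zpowers y) →
      Subgroup.zpowers x = Subgroup.zpowers y))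

theorem aux_cyc {G : Type*} [Group G] (u r v : G) (M N : ℕ) (k : ℤ) (hc : Commute u r)
    (hu : u ^ M = 1) (hr : r ^ N = 1) (hMN : Nat.Coprime M N) (hv : v = u ^ k * r) :
    IsCyclic (Subgroup.closure ({u, v} : Set G)) := by
  obtain ⟨e, he1, he2⟩ := Nat.chineseRemainder hMN 1 0
  have h1 : u ^ e = u := by
    have := (pow_eq_pow_iff_modEq (x := u)).2 (he1.of_dvd (orderOf_dvd_of_pow_eq_one hu))
    simpa using this
  have h2 : r ^ e = 1 := by
    have := (pow_eq_pow_iff_modEq (x := r)).2 (he2.of_dvd (orderOf_dvd_of_pow_eq_one hr))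
    simpa using this
  have hu' : u ∈ Subgroup.zpowers (u * r) := by
    have : (u * r) ^ e = u := by rw [hc.mul_pow, h1, h2, mul_one]
    exact Subgroup.mem_zpowers_iff.2 ⟨(e : ℤ), by rw [zpow_natCast, this]⟩
  have hr' : r ∈ Subgroup.zpowers (u * r) := by
    have := mul_mem (inv_mem hu') (Subgroup.mem_zpowers (u * r))
    simpa using this
  have hle : Subgroup.closure ({u, v} : Set G) ≤ Subgroup.zpowers (u * r) := by
    rw [Subgroup.closure_le]
    rintro y (rfl | rfl)
    · exact hu'
    · rw [hv]; exact mul_mem (zpow_mem hu' _) hr'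
  exact Subgroup.isCyclic_of_le hle

theorem aux_D {P : Type*} [Group P] [Finite P] {p : ℕ} (hp : p.Prime) (hP : IsPGroup p P)
    (c a : P) (H : Subgroup P) (hH : H ≤ Subgroup.zpowers c)
    (hcard : Nat.card H = Nat.card (Subgroup.zpowers c) / p)
    (ha : a ∈ Subgroup.zpowers c) (hca : c ∉ Subgroup.zpowers a) : a ∈ H := by
  obtain ⟨k, rfl⟩ := Subgroup.mem_zpowers_iff.1 ha
  have := Fact.mk hp
  obtain ⟨m, hm⟩ := IsPGroup.iff_orderOf.1 hP c
  have hpk : (p : ℤ) ∣ k := by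
    by_contra hpk
    apply hca
    have hcop : IsCoprime k (orderOf c : ℤ) := by
      rw [hm, Nat.cast_pow]
      exact (((Nat.prime_iff_prime_int.1 hp).coprime_iff_not_dvd.2 hpk).symm).pow_right
    obtain ⟨r, s, hrs⟩ := hcop
    refine Subgroup.mem_zpowers_iff.2 ⟨r, ?_⟩
    calc (c ^ k) ^ r = c ^ (r * k) * (c ^ (orderOf c : ℤ)) ^ s := by
          rw [zpow_natCast, pow_orderOf_eq_one, one_zpow, mul_one, ← zpow_mul, mul_comm]
      _ = c ^ (r * k + s * (orderOf c : ℤ)) := by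
          rw [zpow_add, mul_comm s, zpow_mul c (orderOf c : ℤ) s]
      _ = c := by rw [hrs, zpow_one]
  have hm0 : m ≠ 0 := by
    rintro rfl
    rw [pow_zero, orderOf_eq_one_iff] at hm
    subst hm
    exact hca (one_mem _)
  have hcp : c ^ p ∈ H := by
    have h1 : (H.subgroupOf (Subgroup.zpowers c)).index = p := by
      have h2 := Subgroup.card_mul_index (H.subgroupOf (Subgroup.zpowers c))
      rw [Nat.card_congr (Subgroup.subgroupOfEquivOfLe hH).toEquiv, hcard, Nat.card_zpowers,
        hm] at h2
      obtain ⟨l, rfl⟩ := Nat.exists_eq_succ_of_ne_zero hm0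
      rw [Nat.succ_eq_add_one, pow_succ, Nat.mul_div_cancel _ hp.pos] at h2
      exact Nat.eq_of_mul_eq_mul_left (pow_pos hp.pos l) h2
    have hnorm : (H.subgroupOf (Subgroup.zpowers c)).Normal := inferInstance
    have h3 := Subgroup.pow_index_mem (H.subgroupOf (Subgroup.zpowers c))
      (⟨c, Subgroup.mem_zpowers c⟩ : Subgroup.zpowers c)
    rw [h1, Subgroup.mem_subgroupOf] at h3
    simpa using h3
  obtain ⟨l, rfl⟩ := hpk
  rw [zpow_mul, zpow_natCast]
  exact zpow_mem hcp l

theorem aux_C {P : Type*} [Group P] [Finite P] {p : ℕ} (hp : p.Prime) (hP : IsPGroup p P)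
    (F : Set P) (hF : IsAdmissibleF p P F) (a : P)
    (h : ∃ c, a ∈ Subgroup.zpowers c ∧ c ∉ Subgroup.zpowers a) :
    ∃ y ∈ F, a ∈ Subgroup.zpowers y ∧ y ∉ Subgroup.zpowers a := by
  have key : ∀ c : P, a ∈ Subgroup.zpowers c → c ∉ Subgroup.zpowers a → c ^ p = 1 → a = 1 := by
    intro c h1 h2 h3
    by_contra h4
    have e1 : orderOf c = p := by
      rcases (Nat.dvd_prime hp).1 (orderOf_dvd_of_pow_eq_one h3) with h | h
      · rw [orderOf_eq_one_iff] at h; subst h; simp at h1; exact absurd h1 h4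
      · exact h
    have hle : Subgroup.zpowers a ≤ Subgroup.zpowers c := Subgroup.zpowers_le.2 h1
    have e2 : orderOf a = p := by
      rcases (Nat.dvd_prime hp).1 (e1 ▸ (orderOf_dvd_of_mem_zpowers h1)) with h | h
      · rw [orderOf_eq_one_iff] at h; exact absurd h h4
      · exact h
    have := Subgroup.eq_of_le_of_card_ge hle (by simp [Nat.card_zpowers, e1, e2])
    exact h2 (this ▸ Subgroup.mem_zpowers c)
  rcases hF with ⟨hexp, y, hy, rfl⟩ | ⟨hexp, hF1, hF2, -⟩
  · obtain ⟨c, h1, h2⟩ := h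
    have := key c h1 h2 (hexp ▸ Monoid.pow_exponent_eq_one c)
    subst this
    refine ⟨y, rfl, one_mem _, ?_⟩
    intro hy1
    simp at hy1
    subst hy1
    simp at hy
    exact hp.one_lt.ne hy
  · have ex : ∃ c, (a ∈ Subgroup.zpowers c ∧ c ∉ Subgroup.zpowers a) ∧ p < orderOf c := by
      have hlt : ∀ c : P, c ^ p ≠ 1 → p < orderOf c := by
        intro c hc
        have := Fact.mk hp
        obtain ⟨m, hm⟩ := IsPGroup.iff_orderOf.1 hP c
        by_contra hle
        apply hc
        apply orderOf_dvd_iff_pow_eq_one.1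
        rw [hm] at hle ⊢
        have : m ≤ 1 := by
          by_contra hm1
          exact hle (lt_of_lt_of_eq (lt_of_lt_of_le (by nlinarith [hp.one_lt] : p < p ^ 2)
            (Nat.pow_le_pow_right hp.pos (by omega : 2 ≤ m))) rfl)
        simpa using pow_dvd_pow p this
      obtain ⟨c, h1, h2⟩ := h
      by_cases hc : c ^ p = 1
      · have := key c h1 h2 hc
        subst this
        by_contra hno
        have hall : ∀ d : P, d ^ p = 1 := by
          intro d
          by_contra hd
          refine hno ⟨d, ⟨one_mem _, ?_⟩, hlt d hd⟩
          intro h1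
          simp at h1
          simp [h1] at hd
        exact absurd (Nat.le_of_dvd hp.pos (Monoid.exponent_dvd_of_forall_pow_eq_one hall))
          (not_le.2 hexp)
      · exact ⟨c, ⟨h1, h2⟩, hlt c hc⟩
    obtain ⟨c, ⟨⟨hc1, hc2⟩, hc3⟩, hmax⟩ := Set.exists_max_image
      {c : P | (a ∈ Subgroup.zpowers c ∧ c ∉ Subgroup.zpowers a) ∧ p < orderOf c}
      (fun c => orderOf c) (Set.toFinite _) ex
    have hmem : ∀ d, a ∈ Subgroup.zpowers d → orderOf c < orderOf d → False := by
      intro d hd hlt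
      refine absurd (hmax d ⟨⟨hd, ?_⟩, hc3.trans hlt⟩) (not_le.2 hlt)
      intro hda
      have h1 := Nat.le_of_dvd (orderOf_pos _) (orderOf_dvd_of_mem_zpowers hda)
      have h2 := Nat.le_of_dvd (orderOf_pos _) (orderOf_dvd_of_mem_zpowers hc1)
      omega
    have hS : Subgroup.zpowers c ∈ SPrime p P := by
      refine ⟨⟨inferInstance, ?_⟩, by rwa [Nat.card_zpowers], ?_⟩
      · intro D hD hle
        obtain ⟨d, rfl⟩ := (Subgroup.isCyclic_iff_exists_zpowers_eq_top D).1 hD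
        apply Subgroup.eq_of_le_of_card_ge hle
        simp only [Nat.card_zpowers]
        exact not_lt.1 (hmem d (hle hc1))
      · rintro ⟨C', ⟨hC', -⟩, hlt, -, -, hint⟩
        obtain ⟨d, rfl⟩ := (Subgroup.isCyclic_iff_exists_zpowers_eq_top C').1 hC'
        have := aux_D hp hP c a _ inf_le_left hint hc1 hc2
        simp only [Nat.card_zpowers] at hlt
        exact hmem d this.2 hlt
    obtain ⟨y, hy, he⟩ := hF2 _ hS
    have hyS := hF1 y hy
    have ha_lt : orderOf a < orderOf c := by
      refine lt_of_le_of_ne (Nat.le_of_dvd (orderOf_pos _) (orderOf_dvd_of_mem_zpowers hc1)) ?_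
      intro heq
      have := Subgroup.eq_of_le_of_card_ge (Subgroup.zpowers_le.2 hc1)
        (by simp [Nat.card_zpowers, heq])
      exact hc2 (this ▸ Subgroup.mem_zpowers c)
    have fin : a ∈ Subgroup.zpowers y → orderOf c ≤ orderOf y →
        ∃ y ∈ F, a ∈ Subgroup.zpowers y ∧ y ∉ Subgroup.zpowers a := by
      intro h1 h2
      refine ⟨y, hy, h1, fun h3 => ?_⟩
      have := Nat.le_of_dvd (orderOf_pos _) (orderOf_dvd_of_mem_zpowers h3)
      omega
    have fin2 : orderOf c ≤ orderOf y → Nat.card ↥(Subgroup.zpowers c ⊓ Subgroup.zpowers y)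
        = Nat.card (Subgroup.zpowers c) / p →
        ∃ y ∈ F, a ∈ Subgroup.zpowers y ∧ y ∉ Subgroup.zpowers a := by
      intro h1 h2
      exact fin (aux_D hp hP c a _ inf_le_left h2 hc1 hc2).2 h1
    rcases he with he | he | he
    · exact fin (he ▸ hc1) (by rw [← Nat.card_zpowers c, he, Nat.card_zpowers])
    · exact fin2 (by simpa [Nat.card_zpowers] using he.2.1) he.2.2
    · rcases lt_or_eq_of_le he.2.1 with hlt | heq
      · exact absurd ⟨_, hS.1, hlt, he⟩ hyS.2.2
      · refine fin2 (by simpa [Nat.card_zpowers] using heq.symm.le) ?_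
        rw [inf_comm, he.2.2, heq]

theorem aux_ne {P : Type*} [Group P] {p : ℕ} (hp : p.Prime)
    (F : Set P) (hF : IsAdmissibleF p P F) (a : P) (ha : a ∈ F) : a ≠ 1 := by
  rintro rfl
  rcases hF with ⟨hexp, y, hy, rfl⟩ | ⟨hexp, hF1, hF2, -⟩
  · rw [← Set.mem_singleton_iff.1 ha] at hy
    simp at hy
    exact hp.one_lt.ne hy
  · have := (hF1 1 ha).2.1
    simp at this
    exact absurd hp.pos (by omega)

section
variable {t n : ℕ} {P : Fin t → Type*} [∀ i, Group (P i)] [∀ i, Finite (P i)]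
    {p : Fin t → ℕ}

theorem aux_cop_s12 (hp : ∀ i, (p i).Prime) (hPp : ∀ i, IsPGroup (p i) (P i))
    (hinj : Function.Injective p) (i j : Fin t) (h : i ≠ j) :
    Nat.Coprime (Nat.card (P i)) (Nat.card (P j)) := by
  have := Fact.mk (hp i)
  have := Fact.mk (hp j)
  obtain ⟨a, ha⟩ := IsPGroup.iff_card.1 (hPp i)
  obtain ⟨b, hb⟩ := IsPGroup.iff_card.1 (hPp j)
  rw [ha, hb]
  exact Nat.Coprime.pow _ _ ((Nat.coprime_primes (hp i) (hp j)).2 fun e => h (hinj e))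

theorem aux_copn (hp : ∀ i, (p i).Prime) (hPp : ∀ i, IsPGroup (p i) (P i))
    (hpn : ∀ i, ¬ p i ∣ n) (i : Fin t) : Nat.Coprime (Nat.card (P i)) n := by
  have := Fact.mk (hp i)
  obtain ⟨a, ha⟩ := IsPGroup.iff_card.1 (hPp i)
  rw [ha]
  exact Nat.Coprime.pow_left _ (((hp i).coprime_iff_not_dvd).2 (hpn i))

theorem aux_z (z : Multiplicative (ZMod n)) : z ^ n = 1 := by
  apply Multiplicative.toAdd.injective
  simp

theorem adjP (hp : ∀ i, (p i).Prime) (hPp : ∀ i, IsPGroup (p i) (P i))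
    (hinj : Function.Injective p) (hpn : ∀ i, ¬ p i ∣ n) (i : Fin t) (a : P i)
    (f : ∀ i, P i) (z : Multiplicative (ZMod n))
    (h1 : f i ∈ Subgroup.zpowers a) (h2 : a ∉ Subgroup.zpowers (f i))
    (h3 : (∃ j, j ≠ i ∧ f j ≠ 1) ∨ z ≠ 1) :
    diffAdj ((Pi.mulSingle i a, 1) : (∀ i, P i) × Multiplicative (ZMod n)) (f, z) := by
  refine ⟨?_, ?_, ?_⟩
  · obtain ⟨k, hk⟩ := Subgroup.mem_zpowers_iff.1 h1
    refine aux_cyc _ (Function.update f i 1, z) _ (Nat.card (P i))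
      (n * ∏ j ∈ Finset.univ.erase i, Nat.card (P j)) k ?_ ?_ ?_ ?_ ?_
    · refine Prod.ext ?_ (by simp)
      funext j
      by_cases hj : j = i
      · subst hj; simp
      · simp [hj]
    · refine Prod.ext ?_ (by simp)
      funext j
      by_cases hj : j = i
      · subst hj; simp
      · simp [hj]
    · refine Prod.ext ?_ ?_
      · funext j
        by_cases hj : j = i
        · subst hj; simp
        · have : Nat.card (P j) ∣ n * ∏ j ∈ Finset.univ.erase i, Nat.card (P j) :=
            Dvd.dvd.mul_left (Finset.dvd_prod_of_mem (fun j => Nat.card (P j)) (by simp [hj])) _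
          obtain ⟨c, hc⟩ := this
          simp [hj, hc, pow_mul]
      · simp [pow_mul, aux_z]
    · refine Nat.Coprime.mul_right (aux_copn hp hPp hpn i) (Nat.Coprime.prod_right ?_)
      intro j hj
      exact aux_cop_s12 hp hPp hinj _ _ (Finset.ne_of_mem_erase hj).symm
    · refine Prod.ext ?_ (by simp)
      funext j
      by_cases hj : j = i
      · subst hj; simp [hk]
      · simp [hj]
  · rintro ⟨k, hk⟩
    have e1 := congrArg Prod.fst hk
    have e2 := congrArg Prod.snd hk
    rcases h3 with ⟨j, hj, hf⟩ | hz
    · have := congrFun e1 j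
      simp [hj] at this
      exact hf this
    · simp at e2
      exact hz e2
  · rintro ⟨k, hk⟩
    have := congrFun (congrArg Prod.fst hk) i
    simp at this
    exact h2 (Subgroup.mem_zpowers_iff.2 ⟨k, this.symm⟩)

theorem adjZ (hp : ∀ i, (p i).Prime) (hPp : ∀ i, IsPGroup (p i) (P i))
    (hpn : ∀ i, ¬ p i ∣ n) (x : Multiplicative (ZMod n)) (hx : Subgroup.zpowers x = ⊤)
    (f : ∀ i, P i) (z : Multiplicative (ZMod n))
    (h2 : x ∉ Subgroup.zpowers z) (h3 : f ≠ 1) :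
    diffAdj ((1, x) : (∀ i, P i) × Multiplicative (ZMod n)) (f, z) := by
  refine ⟨?_, ?_, ?_⟩
  · obtain ⟨k, hk⟩ := Subgroup.mem_zpowers_iff.1 (hx ▸ Subgroup.mem_top z)
    refine aux_cyc _ (f, 1) _ n (∏ j, Nat.card (P j)) k ?_ ?_ ?_ ?_ ?_
    · exact Prod.ext (by simp) (by simp)
    · exact Prod.ext (by simp) (by simp [aux_z])
    · refine Prod.ext ?_ (by simp)
      funext j
      obtain ⟨c, hc⟩ := Finset.dvd_prod_of_mem (fun j => Nat.card (P j)) (Finset.mem_univ j)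
      simp [hc, pow_mul]
    · exact Nat.Coprime.prod_right fun j _ => (aux_copn hp hPp hpn j).symm
    · exact Prod.ext (by simp) (by simp [hk])
  · rintro ⟨k, hk⟩
    have := congrArg Prod.fst hk
    simp at this
    exact h3 this
  · rintro ⟨k, hk⟩
    have := congrArg Prod.snd hk
    simp at this
    exact h2 (Subgroup.mem_zpowers_iff.2 ⟨k, this.symm⟩)

theorem aux_nonmax [NeZero n] (f : ∀ i, P i) (z : Multiplicative (ZMod n))
    (x : Multiplicative (ZMod n)) (hx : Subgroup.zpowers x = ⊤)
    (y : (∀ i, P i) × Multiplicative (ZMod n)) (h : diffAdj (f, z) y) :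
    (∃ i, ∃ c, f i ∈ Subgroup.zpowers c ∧ c ∉ Subgroup.zpowers (f i)) ∨
      x ∉ Subgroup.zpowers z := by
  by_contra hno
  push Not at hno
  obtain ⟨hno1, hno2⟩ := hno
  obtain ⟨hcyc, hy, -⟩ := h
  obtain ⟨c, hc⟩ := (Subgroup.isCyclic_iff_exists_zpowers_eq_top _).1 hcyc
  have hv : (f, z) ∈ Subgroup.zpowers c := hc ▸ Subgroup.subset_closure (by simp)
  have hyc : y ∈ Subgroup.zpowers c := hc ▸ Subgroup.subset_closure (by simp)
  have hz : ∀ w, w ∈ Subgroup.zpowers z := by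
    have : (⊤ : Subgroup (Multiplicative (ZMod n))) ≤ Subgroup.zpowers z := by
      rw [← hx]; exact Subgroup.zpowers_le.2 hno2
    exact fun w => this (Subgroup.mem_top w)
  have hpow : c ^ orderOf ((f, z) : (∀ i, P i) × Multiplicative (ZMod n)) = 1 := by
    have h1 := pow_orderOf_eq_one ((f, z) : (∀ i, P i) × Multiplicative (ZMod n))
    generalize orderOf ((f, z) : (∀ i, P i) × Multiplicative (ZMod n)) = N at h1
    refine Prod.ext ?_ ?_
    · funext i
      have h2 := congrFun (congrArg Prod.fst h1) i
      simp at h2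
      have h3 : f i ∈ Subgroup.zpowers (c.1 i) := by
        obtain ⟨k, hk⟩ := Subgroup.mem_zpowers_iff.1 hv
        exact Subgroup.mem_zpowers_iff.2 ⟨k, by simpa using congrFun (congrArg Prod.fst hk) i⟩
      obtain ⟨k, hk⟩ := Subgroup.mem_zpowers_iff.1 (hno1 i _ h3)
      simp [← hk, ← zpow_natCast, ← zpow_mul]
      rw [mul_comm, zpow_mul, zpow_natCast, h2, one_zpow]
    · have h2 := congrArg Prod.snd h1
      simp at h2
      obtain ⟨k, hk⟩ := Subgroup.mem_zpowers_iff.1 (hz c.2)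
      simp [← hk, ← zpow_natCast, ← zpow_mul]
      rw [mul_comm, zpow_mul, zpow_natCast, h2, one_zpow]
  have heq := Subgroup.eq_of_le_of_card_ge (Subgroup.zpowers_le.2 hv) (by
    simp only [Nat.card_zpowers]
    exact Nat.le_of_dvd (orderOf_pos _) (orderOf_dvd_of_pow_eq_one hpow))
  rw [← heq] at hyc
  obtain ⟨k, hk⟩ := Subgroup.mem_zpowers_iff.1 hyc
  exact hy ⟨k, hk.symm⟩

end

/-- Lemma 5.4: let `G = P₁ × ⋯ × P_t × ℤ_n` be a non-cyclic nilpotent group which is not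
a `p`-group, where the `P_i` are the non-cyclic Sylow `p_i`-subgroups of `G`, the primes
`p_i` are pairwise distinct and do not divide `n` (with `t ≥ 2` if `n = 1`). Then for
every admissible choice of the sets `ℱ(P_i)` and every generator `x` of `ℤ_n`, the set
`ℱ(G)`, consisting of the (embedded) elements of the `ℱ(P_i)` together with `x` in the
case `n > 1`, is a dominating set of the difference graph `𝒟(G)`. -/
theorem diffGraph_dominating_set_of_nilpotent
    (t n : ℕ) (hn : 0 < n) (ht : 0 < t) (htn : n = 1 → 2 ≤ t)
    (P : Fin t → Type u) [inst : ∀ i, Group (P i)] [∀ i, Finite (P i)]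
    (p : Fin t → ℕ) (hp : ∀ i, (p i).Prime) (hinj : Function.Injective p)
    (hPp : ∀ i, IsPGroup (p i) (P i)) (hnc : ∀ i, ¬ IsCyclic (P i))
    (hpn : ∀ i, ¬ p i ∣ n)
    (F : ∀ i, Set (P i)) (hF : ∀ i, IsAdmissibleF (p i) (P i) (F i))
    (x : Multiplicative (ZMod n)) (hx : Subgroup.zpowers x = ⊤) :
    (∀ g ∈ ({g : (∀ i, P i) × Multiplicative (ZMod n) |
        (∃ i, ∃ a ∈ F i, g = (Pi.mulSingle i a, 1)) ∨ (1 < n ∧ g = (1, x))} :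
          Set ((∀ i, P i) × Multiplicative (ZMod n))),
      ∃ y, diffAdj g y) ∧
    IsDominatingSet (diffGraph ((∀ i, P i) × Multiplicative (ZMod n)))
      {v : DiffVertex ((∀ i, P i) × Multiplicative (ZMod n)) |
        (∃ i, ∃ a ∈ F i, v.val = (Pi.mulSingle i a, 1)) ∨ (1 < n ∧ v.val = (1, x))} := by
  have : NeZero n := ⟨hn.ne'⟩
  have hnt : ∀ i, ∃ b : P i, b ≠ 1 := by
    intro i
    by_contra hno
    push Not at hno
    have : Subsingleton (P i) := ⟨fun a b => by rw [hno a, hno b]⟩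
    exact hnc i inferInstance
  have hx1 : 1 < n → x ≠ 1 := by
    rintro h rfl
    have : Fact (1 < n) := ⟨h⟩
    have : (Multiplicative.ofAdd (1 : ZMod n)) ∈ Subgroup.zpowers (1 : Multiplicative (ZMod n)) :=
      hx ▸ Subgroup.mem_top _
    simp at this
  have hz1 : ∀ z : Multiplicative (ZMod n), z ≠ 1 → 1 < n := by
    intro z hz
    by_contra h
    have : n = 1 := by omega
    subst this
    exact hz (Subsingleton.elim _ _)
  have hmem : ∀ z : Multiplicative (ZMod n), x ∉ Subgroup.zpowers z → 1 < n := by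
    intro z hz
    apply hz1 x
    rintro rfl
    exact hz (one_mem _)
  have ne_mem : ∀ {H : Type u} [Group H] (b : H), b ≠ 1 → b ∉ Subgroup.zpowers (1 : H) := by
    intro H _ b hb h
    simp at h
    exact hb h
  have hother : n = 1 → ∀ i : Fin t, ∃ j, j ≠ i := by
    intro h i
    have : Nontrivial (Fin t) := Fin.nontrivial_iff_two_le.2 (htn h)
    exact exists_ne i
  refine ⟨?_, ?_⟩
  · rintro g (⟨i, a, ha, rfl⟩ | ⟨h, rfl⟩)
    · have ha1 := aux_ne (hp i) _ (hF i) a ha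
      by_cases h : 1 < n
      · exact ⟨(1, x), adjP hp hPp hinj hpn i a 1 x (one_mem _) (ne_mem a ha1) (Or.inr (hx1 h))⟩
      · obtain ⟨j, hj⟩ := hother (by omega) i
        obtain ⟨b, hb⟩ := hnt j
        refine ⟨(Pi.mulSingle j b, 1), adjP hp hPp hinj hpn i a _ 1 ?_ ?_ (Or.inl ⟨j, hj, ?_⟩)⟩
        · simp [hj.symm, one_mem]
        · rw [Pi.mulSingle_eq_of_ne hj.symm]; exact ne_mem a ha1
        · simpa using hb
    · obtain ⟨b, hb⟩ := hnt ⟨0, ht⟩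
      refine ⟨(Pi.mulSingle ⟨0, ht⟩ b, 1), adjZ hp hPp hpn x hx _ 1 ?_ ?_⟩
      · intro h'
        simp at h'
        exact hx1 h h'
      · simpa using hb
  · rintro ⟨⟨f, z⟩, y, hy⟩
    right
    have fin : ∀ u : (∀ i, P i) × Multiplicative (ZMod n),
        ((∃ i, ∃ a ∈ F i, u = (Pi.mulSingle i a, 1)) ∨ (1 < n ∧ u = (1, x))) →
        diffAdj u (f, z) →
        ∃ u ∈ {v : DiffVertex ((∀ i, P i) × Multiplicative (ZMod n)) |
          (∃ i, ∃ a ∈ F i, v.val = (Pi.mulSingle i a, 1)) ∨ (1 < n ∧ v.val = (1, x))},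
          (diffGraph ((∀ i, P i) × Multiplicative (ZMod n))).Adj u ⟨(f, z), y, hy⟩ := by
      intro u hu hadj
      refine ⟨⟨u, _, hadj⟩, hu, ?_⟩
      rw [diffGraph, SimpleGraph.fromRel_adj]
      refine ⟨?_, Or.inl hadj⟩
      intro he
      exact hadj.2.1 ⟨1, by rw [zpow_one]; exact (congrArg Subtype.val he).symm⟩
    by_contra hcon
    have finP : ∀ i, (∃ c, f i ∈ Subgroup.zpowers c ∧ c ∉ Subgroup.zpowers (f i)) →
        ((∃ j, j ≠ i ∧ f j ≠ 1) ∨ z ≠ 1) → False := by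
      intro i hc h3
      obtain ⟨a, ha, h1, h2⟩ := aux_C (hp i) (hPp i) (F i) (hF i) (f i) hc
      exact hcon (fin _ (Or.inl ⟨i, a, ha, rfl⟩) (adjP hp hPp hinj hpn i a f z h1 h2 h3))
    have finZ : x ∉ Subgroup.zpowers z → f ≠ 1 → False := fun h2 h3 =>
      hcon (fin _ (Or.inr ⟨hmem z h2, rfl⟩) (adjZ hp hPp hpn x hx f z h2 h3))
    have one_nm : ∀ i, f i = 1 → ∃ c, f i ∈ Subgroup.zpowers c ∧ c ∉ Subgroup.zpowers (f i) := by
      intro i hi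
      obtain ⟨b, hb⟩ := hnt i
      rw [hi]
      exact ⟨b, one_mem _, ne_mem b hb⟩
    by_cases hf : f = 1
    · refine finP ⟨0, ht⟩ (one_nm _ (by simp [hf])) (Or.inr ?_)
      rintro rfl
      subst hf
      exact hy.2.2 ⟨0, by simp⟩
    · obtain ⟨k, hk⟩ := Function.ne_iff.1 hf
      rcases aux_nonmax f z x hx y hy with ⟨i, hi⟩ | hz
      · by_cases hik : k = i
        · subst hik
          by_cases h3 : (∃ j, j ≠ k ∧ f j ≠ 1) ∨ z ≠ 1
          · exact finP k hi h3
          · push Not at h3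
            by_cases hn1 : 1 < n
            · refine finZ ?_ hf
              rw [h3.2]
              intro h'
              simp at h'
              exact hx1 hn1 h'
            · obtain ⟨j, hj⟩ := hother (by omega) k
              exact finP j (one_nm j (h3.1 j hj)) (Or.inl ⟨k, hj.symm, hk⟩)
        · exact finP i hi (Or.inl ⟨k, hik, hk⟩)
      · exact finZ hz hf
end

section
/- Let G be a finite non-cyclic nilpotent group whose order is not a prime power. Then the diameter of the difference graph D(G) equals 4 if and only if there exist a prime p, a Sylow p-subgroup P of G, and two distinct cyclic subgroups ⟨u⟩ and ⟨v⟩ of P of the same order, neither of which is a maximal cyclic subgroup of P. -/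
open Subgroup in
theorem dg_key {G : Type*} [Group G] [Finite G] {c x y : G} (hx : x ∈ zpowers c)
    (hy : y ∈ zpowers c) (h : orderOf x ∣ orderOf y) : x ∈ zpowers y := by
  obtain ⟨a, rfl⟩ := (mem_powers_iff_mem_zpowers.mpr hx)
  obtain ⟨b, rfl⟩ := (mem_powers_iff_mem_zpowers.mpr hy)
  simp only at h ⊢
  rw [orderOf_pow, orderOf_pow] at h
  have hn : 0 < orderOf c := orderOf_pos c
  set n := orderOf c with hnd
  have h1 : n / n.gcd a * n.gcd a = n := Nat.div_mul_cancel (Nat.gcd_dvd_left _ _)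
  have h2 : n / n.gcd b * n.gcd b = n := Nat.div_mul_cancel (Nat.gcd_dvd_left _ _)
  obtain ⟨k, hk⟩ := h
  have h3 : n.gcd a = k * n.gcd b := by
    have hpos : 0 < n / n.gcd a := by
      rcases Nat.eq_zero_or_pos (n / n.gcd a) with h0 | h0
      · rw [h0] at h1; omega
      · exact h0
    apply Nat.eq_of_mul_eq_mul_left hpos
    rw [h1, ← mul_assoc, ← hk, h2]
  have h4 : n.gcd b ∣ a := (Dvd.intro_left k h3.symm).trans (Nat.gcd_dvd_right n a)
  have h5 : c ^ (n.gcd b) ∈ zpowers (c ^ b) := by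
    refine ⟨n.gcdB b, ?_⟩
    simp only
    have := Nat.gcd_eq_gcd_ab n b
    rw [← zpow_natCast c (n.gcd b), this, zpow_add, zpow_mul c (n : ℤ), zpow_natCast c n, hnd,
      pow_orderOf_eq_one, one_zpow, one_mul, zpow_mul, zpow_natCast]
  obtain ⟨m, rfl⟩ := h4
  rw [pow_mul]
  exact pow_mem h5 m

theorem dg_adj_iff {G : Type*} [Group G] [Finite G] {x y : G} :
    diffAdj x y ↔ (∃ c, x ∈ Subgroup.zpowers c ∧ y ∈ Subgroup.zpowers c) ∧
      ¬ orderOf y ∣ orderOf x ∧ ¬ orderOf x ∣ orderOf y := by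
  have aux : (IsCyclic (Subgroup.closure ({x, y} : Set G))) ↔
      ∃ c, x ∈ Subgroup.zpowers c ∧ y ∈ Subgroup.zpowers c := by
    constructor
    · intro h
      obtain ⟨c, hc⟩ := (Subgroup.isCyclic_iff_exists_zpowers_eq_top _).mp h
      refine ⟨c, ?_, ?_⟩ <;> rw [hc] <;> apply Subgroup.subset_closure <;> simp
    · rintro ⟨c, h1, h2⟩
      have hle : Subgroup.closure ({x, y} : Set G) ≤ Subgroup.zpowers c := by
        rw [Subgroup.closure_le]
        rintro z (rfl | rfl) <;> assumption
      exact isCyclic_of_injective (Subgroup.inclusion hle) (Subgroup.inclusion_injective hle)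
  unfold diffAdj
  rw [aux]
  refine and_congr_right ?_
  rintro ⟨c, h1, h2⟩
  have e : ∀ {a b : G}, a ∈ Subgroup.zpowers c → b ∈ Subgroup.zpowers c →
      ((∃ k : ℤ, b = a ^ k) ↔ orderOf b ∣ orderOf a) := by
    intro a b ha hb
    constructor
    · rintro ⟨k, rfl⟩
      exact orderOf_dvd_of_mem_zpowers ⟨k, rfl⟩
    · intro h
      obtain ⟨k, hk⟩ := dg_key hb ha h
      exact ⟨k, hk.symm⟩
  rw [e h1 h2, e h2 h1]

theorem dg_symm {G : Type*} [Group G] [Finite G] {x y : G} (h : diffAdj x y) : diffAdj y x := by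
  rw [dg_adj_iff] at h ⊢
  obtain ⟨⟨c, h1, h2⟩, h3, h4⟩ := h
  exact ⟨⟨c, h2, h1⟩, h4, h3⟩

theorem dg_exists_order {G : Type*} [Group G] [Finite G] (x : G) {d : ℕ} (hd : d ∣ orderOf x) :
    ∃ y ∈ Subgroup.zpowers x, orderOf y = d := by
  obtain ⟨k, hk⟩ := hd
  have hp := orderOf_pos x
  refine ⟨x ^ k, Subgroup.npow_mem_zpowers x k, ?_⟩
  have hk0 : k ≠ 0 := by rintro rfl; omega
  rw [orderOf_pow_of_dvd hk0 ⟨d, by rw [hk, mul_comm]⟩, hk]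
  exact Nat.mul_div_cancel _ (Nat.pos_of_ne_zero hk0)

theorem dg_dvd {G : Type*} [Group G] {x c : G} (h : x ∈ Subgroup.zpowers c) :
    orderOf x ∣ orderOf c := by
  exact orderOf_dvd_of_mem_zpowers h

/-- coprime commuting elements lie in a common cyclic subgroup -/
theorem dg_join {G : Type*} [Group G] [Finite G] {a b : G} (hc : Commute a b)
    (ho : (orderOf a).Coprime (orderOf b)) :
    a ∈ Subgroup.zpowers (a * b) ∧ b ∈ Subgroup.zpowers (a * b) := by
  have key : ∀ {a b : G}, Commute a b → (orderOf a).Coprime (orderOf b) →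
      a ∈ Subgroup.zpowers (a * b) := by
    intro a b hc ho
    have h1 : (a * b) ^ orderOf b = a ^ orderOf b := by
      rw [hc.mul_pow, pow_orderOf_eq_one, mul_one]
    have h2 : a ∈ Subgroup.zpowers (a ^ orderOf b) := mem_zpowers_pow_iff.mpr ho.symm
    rw [← h1] at h2
    exact (Subgroup.zpowers_le.mpr (Subgroup.npow_mem_zpowers _ _)) h2
  refine ⟨key hc ho, ?_⟩
  rw [hc.eq]
  exact key hc.symm ho.symm

/-- an element belongs to a subgroup if it contains two elements of `⟨x⟩` with complementary
coprime orders -/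
theorem dg_split {G : Type*} [Group G] [Finite G] {x a b : G} {H : Subgroup G}
    (ha : a ∈ Subgroup.zpowers x) (hb : b ∈ Subgroup.zpowers x)
    (hm : orderOf a * orderOf b = orderOf x) (ho : (orderOf a).Coprime (orderOf b))
    (haH : a ∈ H) (hbH : b ∈ H) : x ∈ H := by
  have hc : Commute a b := by
    obtain ⟨i, rfl⟩ := ha
    obtain ⟨j, rfl⟩ := hb
    exact (Commute.refl x).zpow_zpow i j
  have h1 : orderOf (a * b) = orderOf x := by
    rw [hc.orderOf_mul_eq_mul_orderOf_of_coprime ho, hm]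
  have h2 : x ∈ Subgroup.zpowers (a * b) :=
    dg_key (Subgroup.mem_zpowers x) (mul_mem ha hb) (by rw [h1])
  exact (Subgroup.zpowers_le.mpr (mul_mem haH hbH)) h2

section nil
variable {G : Type*} [Group G] [Finite G]

theorem dg_sylow_normal (hnil : Group.IsNilpotent G) {p : ℕ} (hp : p.Prime) (P : Sylow p G) :
    (P : Subgroup G).Normal := by
  have q := (Group.isNilpotent_of_finite_tfae (G := G)).out 0 3
  rw [q] at hnil
  exact hnil p ⟨hp⟩ P

theorem dg_mem_sylow (hnil : Group.IsNilpotent G) {p : ℕ} (hp : p.Prime) (P : Sylow p G) {w : G} {k : ℕ}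
    (hw : orderOf w = p ^ k) : w ∈ (P : Subgroup G) := by
  have := Fact.mk hp
  have hn : (P : Subgroup G).Normal :=
    dg_sylow_normal hnil hp P
  have hpg : IsPGroup p (Subgroup.zpowers w) :=
    IsPGroup.of_card (n := k) (by rw [Nat.card_zpowers, hw])
  obtain ⟨Q, hQ⟩ := hpg.exists_le_sylow
  have := Sylow.unique_of_normal P hn
  have : Q = P := Subsingleton.elim _ _
  rw [← this]
  exact hQ (Subgroup.mem_zpowers w)

theorem dg_commute_pq (hnil : Group.IsNilpotent G) {p q : ℕ} (hp : p.Prime) (hq : q.Prime) (hpq : p ≠ q)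
    {a b : G} {k l : ℕ} (ha : orderOf a = p ^ k) (hb : orderOf b = q ^ l) : Commute a b := by
  have := Fact.mk hp
  have := Fact.mk hq
  obtain ⟨P⟩ : Nonempty (Sylow p G) := inferInstance
  obtain ⟨Q⟩ : Nonempty (Sylow q G) := inferInstance
  have hP : (P : Subgroup G).Normal :=
    dg_sylow_normal hnil hp P
  have hQ : (Q : Subgroup G).Normal :=
    dg_sylow_normal hnil hq Q
  exact Subgroup.commute_of_normal_of_disjoint _ _ hP hQ
    (IsPGroup.disjoint_of_ne p q hpq _ _ P.2 Q.2) a b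
    (dg_mem_sylow hnil hp P ha) (dg_mem_sylow hnil hq Q hb)

theorem dg_commute (hnil : Group.IsNilpotent G) {p : ℕ} (hp : p.Prime)
    {a : G} {k : ℕ} (ha : orderOf a = p ^ k) :
    ∀ n : ℕ, ∀ b : G, orderOf b = n → p.Coprime n → Commute a b := by
  intro n
  induction n using Nat.recOnPosPrimePosCoprime with
  | prime_pow q l hq hl =>
    intro b hb hc
    refine dg_commute_pq hnil hp hq ?_ ha hb
    rintro rfl
    rw [Nat.coprime_pow_right_iff hl, Nat.coprime_self] at hc
    exact hp.one_lt.ne' hc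
  | zero => intro b hb; exact absurd hb (orderOf_pos b).ne'
  | one => intro b hb _; rw [orderOf_eq_one_iff] at hb; subst hb; exact Commute.one_right a
  | coprime m l hm hl hml ihm ihl =>
    intro b hb hc
    obtain ⟨c, hc1, hc2⟩ := dg_exists_order b (d := m) (by rw [hb]; exact Dvd.intro _ rfl)
    obtain ⟨d, hd1, hd2⟩ := dg_exists_order b (d := l) (by rw [hb]; exact Dvd.intro_left _ rfl)
    have h1 := ihm c hc2 (Nat.Coprime.coprime_mul_right_right hc)
    have h2 := ihl d hd2 (Nat.Coprime.coprime_mul_left_right hc)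
    have := dg_split (H := Subgroup.centralizer {a}) hc1 hd1 (by rw [hc2, hd2, hb])
      (by rw [hc2, hd2]; exact hml) (Subgroup.mem_centralizer_singleton_iff.mpr h1.symm.eq)
      (Subgroup.mem_centralizer_singleton_iff.mpr h2.symm.eq)
    exact (Subgroup.mem_centralizer_singleton_iff.mp this).symm

/-- Every vertex has a prime power order neighbour. -/
theorem dg_nbr {x y : G} (h : diffAdj x y) :
    ∃ p k w, p.Prime ∧ orderOf w = p ^ k ∧ diffAdj x w := by
  rw [dg_adj_iff] at h
  obtain ⟨⟨c, h1, h2⟩, h3, h4⟩ := h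
  rw [Nat.dvd_iff_prime_pow_dvd_dvd] at h3
  push Not at h3
  obtain ⟨p, k, hp, h5, h6⟩ := h3
  obtain ⟨w, hw, hwo⟩ := dg_exists_order y h5
  refine ⟨p, k, w, hp, hwo, ?_⟩
  rw [dg_adj_iff]
  refine ⟨⟨c, h1, Subgroup.zpowers_le.mpr h2 hw⟩, by rwa [hwo], ?_⟩
  rw [hwo]
  intro h7
  exact h4 (h7.trans h5)

theorem dg_not_dvd {x w : G} {p k : ℕ} (hp : p.Prime) (hw : orderOf w = p ^ k) (h : diffAdj x w)
    (m : ℕ) : ¬ orderOf x ∣ p ^ m := by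
  intro hd
  obtain ⟨i, -, hi⟩ := (Nat.dvd_prime_pow hp).mp hd
  rw [dg_adj_iff, hw, hi] at h
  rcases le_total i k with h1 | h1
  · exact h.2.2 (pow_dvd_pow p h1)
  · exact h.2.1 (pow_dvd_pow p h1)

theorem dg_ne_one {x w : G} (h : diffAdj x w) : orderOf w ≠ 1 := by
  rw [dg_adj_iff] at h
  intro h1
  rw [h1] at h
  exact h.2.1 (one_dvd _)

theorem dg_adj_coprime {p q k l : ℕ} (hnil : Group.IsNilpotent G) (hp : p.Prime) (hq : q.Prime)
    (hpq : p ≠ q) {a b : G} (ha : orderOf a = p ^ k) (hb : orderOf b = q ^ l)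
    (ha1 : orderOf a ≠ 1) (hb1 : orderOf b ≠ 1) : diffAdj a b := by
  have hco : (orderOf a).Coprime (orderOf b) := by
    rw [ha, hb]
    exact Nat.Coprime.pow k l ((Nat.coprime_primes hp hq).mpr hpq)
  have hj := dg_join (dg_commute_pq hnil hp hq hpq ha hb) hco
  rw [dg_adj_iff]
  refine ⟨⟨_, hj.1, hj.2⟩, ?_, ?_⟩
  · intro h; exact hb1 (Nat.Coprime.eq_one_of_dvd hco.symm h)
  · intro h; exact ha1 (Nat.Coprime.eq_one_of_dvd hco h)

theorem dg_other (hnc : ¬ IsCyclic G) (hpp : ¬ IsPrimePow (Nat.card G)) {p : ℕ} (hp : p.Prime) :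
    ∃ q : ℕ, q.Prime ∧ p ≠ q ∧ ∃ t : G, orderOf t = q := by
  by_contra! hcon
  have hall : ∀ {d : ℕ}, d.Prime → d ∣ Nat.card G → d = p := by
    intro d hd hdd
    by_contra hne
    have := Fact.mk hd
    obtain ⟨t, ht⟩ := exists_prime_orderOf_dvd_card' d hdd
    exact hcon d hd (Ne.symm hne) t ht
  have hcard := Nat.eq_prime_pow_of_unique_prime_dvd (Nat.card_pos (α := G)).ne' hall
  rcases Nat.eq_zero_or_pos (Nat.card G).primeFactorsList.length with h0 | h0
  · rw [h0, pow_zero] at hcard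
    have : Subsingleton G := (Nat.card_eq_one_iff_unique.mp hcard).1
    exact hnc inferInstance
  · apply hpp
    rw [hcard]
    exact hp.isPrimePow.pow h0.ne'

def dgWit (P : Subgroup G) (u v : G) : Prop :=
  u ∈ P ∧ v ∈ P ∧ Subgroup.zpowers u ≠ Subgroup.zpowers v ∧ orderOf u = orderOf v ∧
        (∃ w ∈ P, Subgroup.zpowers u < Subgroup.zpowers w) ∧
        (∃ w ∈ P, Subgroup.zpowers v < Subgroup.zpowers w)

theorem dg_lt {c u w : G} (hu : u ∈ Subgroup.zpowers c) (hw : w ∈ Subgroup.zpowers c) {p i k : ℕ}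
    (hp : p.Prime) (h1 : orderOf u = p ^ i) (h2 : orderOf w = p ^ k) (hik : i < k) :
    Subgroup.zpowers u < Subgroup.zpowers w := by
  refine lt_of_le_of_ne (Subgroup.zpowers_le.mpr
    (dg_key hu hw (by rw [h1, h2]; exact pow_dvd_pow p hik.le))) ?_
  intro h
  have := congrArg (fun H : Subgroup G => Nat.card H) h
  simp only [Nat.card_zpowers] at this
  rw [h1, h2] at this
  exact hik.ne (Nat.pow_right_injective hp.two_le this)

theorem dg_core (hnil : Group.IsNilpotent G) {p k l : ℕ} (hp : p.Prime) {x y w w' : G}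
    (hw : orderOf w = p ^ k) (hw' : orderOf w' = p ^ l) (hxw : diffAdj x w) (hyw : diffAdj y w')
    (hle : (orderOf x).factorization p ≤ (orderOf y).factorization p) (P : Sylow p G) :
    diffAdj x w' ∨ ∃ u v, dgWit (P : Subgroup G) u v := by
  have hxw0 := hxw
  have hyw0 := hyw
  rw [dg_adj_iff] at hxw hyw
  obtain ⟨⟨c, hxc, hwc⟩, hnx, -⟩ := hxw
  obtain ⟨⟨d, hyd, hwd⟩, hny, -⟩ := hyw
  have hx0 : orderOf x ≠ 0 := (orderOf_pos x).ne'
  have hy0 : orderOf y ≠ 0 := (orderOf_pos y).ne'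
  rw [hw, hp.pow_dvd_iff_le_factorization hx0, not_le] at hnx
  rw [hw', hp.pow_dvd_iff_le_factorization hy0, not_le] at hny
  set i := (orderOf x).factorization p with hi
  set j := (orderOf y).factorization p with hj
  obtain ⟨u, hu, huo⟩ := dg_exists_order x (d := p ^ i)
    ((hp.pow_dvd_iff_le_factorization hx0).mpr le_rfl)
  obtain ⟨v, hv, hvo⟩ := dg_exists_order y (d := p ^ i)
    ((hp.pow_dvd_iff_le_factorization hy0).mpr hle)
  have huw := dg_lt (Subgroup.zpowers_le.mpr hxc hu) hwc hp huo hw hnx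
  have hvw := dg_lt (Subgroup.zpowers_le.mpr hyd hv) hwd hp hvo hw' (hle.trans_lt hny)
  by_cases huv : Subgroup.zpowers u = Subgroup.zpowers v
  · left
    have huw' : u ∈ Subgroup.zpowers w' := hvw.le (huv ▸ Subgroup.mem_zpowers u)
    obtain ⟨b, hb, hbo⟩ := dg_exists_order x (d := orderOf x / p ^ i)
      (Nat.div_dvd_of_dvd (Nat.ordProj_dvd _ _))
    have hcop : p.Coprime (orderOf b) := by rw [hbo]; exact Nat.coprime_ordCompl hp hx0
    have hcomm := dg_commute hnil hp hw' _ b rfl hcop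
    have hJ := dg_join hcomm (by rw [hw']; exact Nat.Coprime.pow_left l hcop)
    rw [dg_adj_iff]
    refine ⟨⟨w' * b, ?_, hJ.1⟩, ?_, ?_⟩
    · refine dg_split hu hb ?_ ?_ (Subgroup.zpowers_le.mpr hJ.1 huw') hJ.2
      · rw [huo, hbo]; exact Nat.ordProj_mul_ordCompl_eq_self _ _
      · rw [huo]; exact Nat.Coprime.pow_left i hcop
    · rw [hw', hp.pow_dvd_iff_le_factorization hx0, not_le]; omega
    · rw [hw']; exact dg_not_dvd hp hw hxw0 l
  · right
    exact ⟨u, v, dg_mem_sylow hnil hp P huo, dg_mem_sylow hnil hp P hvo, huv, by rw [huo, hvo],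
      ⟨w, dg_mem_sylow hnil hp P hw, huw⟩, ⟨w', dg_mem_sylow hnil hp P hw', hvw⟩⟩

theorem dg_max (p : ℕ) : ∃ a : G, p.Coprime (orderOf a) ∧
    ∀ b : G, p.Coprime (orderOf b) → orderOf b ≤ orderOf a := by
  obtain ⟨a, ha, h⟩ := Set.exists_max_image {a : G | p.Coprime (orderOf a)} orderOf
    (Set.toFinite _) ⟨1, by simp⟩
  exact ⟨a, ha, h⟩

theorem dg_nbr_max (hnil : Group.IsNilpotent G) {p k : ℕ} (hp : p.Prime) {u a z : G}
    (hu : orderOf u = p ^ k) (ha : p.Coprime (orderOf a))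
    (hmax : ∀ b : G, p.Coprime (orderOf b) → orderOf b ≤ orderOf a)
    (hz : diffAdj (u * a) z) : u ∈ Subgroup.zpowers z := by
  have hcop : (orderOf u).Coprime (orderOf a) := by rw [hu]; exact Nat.Coprime.pow_left k ha
  have hcomm := dg_commute hnil hp hu _ a rfl ha
  have hJ := dg_join hcomm hcop
  have hox := hcomm.orderOf_mul_eq_mul_orderOf_of_coprime hcop
  rw [dg_adj_iff] at hz
  obtain ⟨⟨c, hxc, hzc⟩, hn, -⟩ := hz
  refine dg_key (Subgroup.zpowers_le.mpr hxc hJ.1) hzc ?_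
  by_contra hnd
  have hc0 : orderOf c ≠ 0 := (orderOf_pos c).ne'
  have hz0 : orderOf z ≠ 0 := (orderOf_pos z).ne'
  obtain ⟨b, hb, hbo⟩ := dg_exists_order c (d := orderOf c / p ^ (orderOf c).factorization p)
      (Nat.div_dvd_of_dvd (Nat.ordProj_dvd _ _))
  have hbc : p.Coprime (orderOf b) := by rw [hbo]; exact Nat.coprime_ordCompl hp hc0
  have hprod : p ^ (orderOf c).factorization p * orderOf b = orderOf c := by
    rw [hbo]; exact Nat.ordProj_mul_ordCompl_eq_self _ _
  have had : orderOf a ∣ orderOf b := by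
    have h1 : orderOf a ∣ orderOf c := (Dvd.intro_left _ hox.symm).trans (dg_dvd hxc)
    rw [← hprod] at h1
    exact Nat.Coprime.dvd_of_dvd_mul_left (Nat.Coprime.pow_right _ ha.symm) h1
  have hab : orderOf a = orderOf b :=
    le_antisymm (Nat.le_of_dvd (orderOf_pos b) had) (hmax b hbc)
  apply hn
  rw [hox, hu]
  rw [hu, hp.pow_dvd_iff_le_factorization hz0, not_le] at hnd
  rw [← Nat.ordProj_mul_ordCompl_eq_self (orderOf z) p]
  refine mul_dvd_mul (pow_dvd_pow p hnd.le) ?_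
  rw [hab]
  have h2 : orderOf z / p ^ (orderOf z).factorization p ∣ orderOf c :=
    (Nat.div_dvd_of_dvd (Nat.ordProj_dvd _ _)).trans (dg_dvd hzc)
  rw [← hprod] at h2
  exact Nat.Coprime.dvd_of_dvd_mul_left
    (Nat.Coprime.pow_right _ (Nat.coprime_ordCompl hp hz0).symm) h2

theorem dg_vertex_max (hnil : Group.IsNilpotent G) {p k l : ℕ} (hp : p.Prime) {u w a : G}
    (hu : orderOf u = p ^ k) (hw : orderOf w = p ^ l)
    (huw : Subgroup.zpowers u < Subgroup.zpowers w) (ha : p.Coprime (orderOf a))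
    (ha1 : orderOf a ≠ 1) : diffAdj (u * a) w := by
  have hcop : (orderOf u).Coprime (orderOf a) := by rw [hu]; exact Nat.Coprime.pow_left k ha
  have hcomm := dg_commute hnil hp hu _ a rfl ha
  have hox := hcomm.orderOf_mul_eq_mul_orderOf_of_coprime hcop
  have hcop' : (orderOf w).Coprime (orderOf a) := by rw [hw]; exact Nat.Coprime.pow_left l ha
  have hcomm' := dg_commute hnil hp hw _ a rfl ha
  have hJ := dg_join hcomm' hcop'
  have huw' : u ∈ Subgroup.zpowers w := huw.le (Subgroup.mem_zpowers u)
  rw [dg_adj_iff]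
  refine ⟨⟨w * a, mul_mem (Subgroup.zpowers_le.mpr hJ.1 huw') hJ.2, hJ.1⟩, ?_, ?_⟩
  · rw [hox]
    intro h
    have h1 := hcop'.dvd_of_dvd_mul_right h
    exact not_le_of_gt huw (Subgroup.zpowers_le.mpr (dg_key (Subgroup.mem_zpowers w) huw' h1))
  · rw [hox]
    intro h
    exact ha1 (Nat.Coprime.eq_one_of_dvd hcop'.symm ((Dvd.intro_left _ rfl).trans h))

theorem dg_graph_adj {x y : DiffVertex G} : (diffGraph G).Adj x y ↔ diffAdj x.1 y.1 := by
  unfold diffGraph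
  rw [SimpleGraph.fromRel_adj]
  constructor
  · rintro ⟨-, h | h⟩
    · exact h
    · exact dg_symm h
  · intro h
    refine ⟨?_, Or.inl h⟩
    rintro rfl
    exact (dg_adj_iff.mp h).2.1 dvd_rfl

theorem dg_edist2 {x y : DiffVertex G} {z : G} (h1 : diffAdj x.1 z) (h2 : diffAdj z y.1) :
    (diffGraph G).edist x y ≤ 2 := by
  let Z : DiffVertex G := ⟨z, _, h2⟩
  have a1 : (diffGraph G).Adj x Z := dg_graph_adj.mpr h1
  have a2 : (diffGraph G).Adj Z y := dg_graph_adj.mpr h2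
  have h := SimpleGraph.Walk.edist_le (G := diffGraph G) (u := x) (v := y)
    (.cons a1 (.cons a2 .nil))
  simp only [SimpleGraph.Walk.length_cons, SimpleGraph.Walk.length_nil] at h
  exact_mod_cast h

theorem dg_edist3 {x y : DiffVertex G} {z t : G} (h1 : diffAdj x.1 z) (h2 : diffAdj z t)
    (h3 : diffAdj t y.1) : (diffGraph G).edist x y ≤ 3 := by
  let Z : DiffVertex G := ⟨z, _, h2⟩
  let T : DiffVertex G := ⟨t, _, h3⟩
  have a1 : (diffGraph G).Adj x Z := dg_graph_adj.mpr h1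
  have a2 : (diffGraph G).Adj Z T := dg_graph_adj.mpr h2
  have a3 : (diffGraph G).Adj T y := dg_graph_adj.mpr h3
  have h := SimpleGraph.Walk.edist_le (G := diffGraph G) (u := x) (v := y)
    (.cons a1 (.cons a2 (.cons a3 .nil)))
  simp only [SimpleGraph.Walk.length_cons, SimpleGraph.Walk.length_nil] at h
  exact_mod_cast h

theorem dg_edist4 {x y : DiffVertex G} {z t s : G} (h1 : diffAdj x.1 z) (h2 : diffAdj z t)
    (h3 : diffAdj t s) (h4 : diffAdj s y.1) : (diffGraph G).edist x y ≤ 4 := by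
  let Z : DiffVertex G := ⟨z, _, h2⟩
  let T : DiffVertex G := ⟨t, _, h3⟩
  let S : DiffVertex G := ⟨s, _, h4⟩
  have a1 : (diffGraph G).Adj x Z := dg_graph_adj.mpr h1
  have a2 : (diffGraph G).Adj Z T := dg_graph_adj.mpr h2
  have a3 : (diffGraph G).Adj T S := dg_graph_adj.mpr h3
  have a4 : (diffGraph G).Adj S y := dg_graph_adj.mpr h4
  have h := SimpleGraph.Walk.edist_le (G := diffGraph G) (u := x) (v := y)
    (.cons a1 (.cons a2 (.cons a3 (.cons a4 .nil))))
  simp only [SimpleGraph.Walk.length_cons, SimpleGraph.Walk.length_nil] at h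
  exact_mod_cast h

theorem dg_main (hnil : Group.IsNilpotent G) (hnc : ¬ IsCyclic G)
    (hpp : ¬ IsPrimePow (Nat.card G)) (x y : DiffVertex G) :
    (diffGraph G).edist x y ≤ 3 ∨ ((diffGraph G).edist x y ≤ 4 ∧
      ∃ (p : ℕ), p.Prime ∧ ∃ (P : Sylow p G) (u v : G), dgWit (P : Subgroup G) u v) := by
  obtain ⟨x', hx'⟩ := x.2
  obtain ⟨y', hy'⟩ := y.2
  obtain ⟨p, k, w, hp, hw, hxw⟩ := dg_nbr hx'
  obtain ⟨q, l, v, hq, hv, hyv⟩ := dg_nbr hy'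
  by_cases hpq : p = q
  · subst hpq
    obtain ⟨P⟩ : Nonempty (Sylow p G) := inferInstance
    have h23 : ((2 : ℕ∞)) ≤ 3 := by norm_num
    have hA : diffAdj x.1 v ∨ diffAdj y.1 w ∨ ∃ u v, dgWit (P : Subgroup G) u v := by
      rcases le_total ((orderOf x.1).factorization p) ((orderOf y.1).factorization p) with h | h
      · rcases dg_core hnil hp hw hv hxw hyv h P with h | h
        · exact Or.inl h
        · exact Or.inr (Or.inr h)
      · exact Or.inr (dg_core hnil hp hv hw hyv hxw h P)
    rcases hA with h | h | h
    · left
      exact (dg_edist2 h (dg_symm hyv)).trans h23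
    · left
      exact (dg_edist2 hxw (dg_symm h)).trans h23
    · right
      refine ⟨?_, p, hp, P, h⟩
      obtain ⟨r, hr, hpr, t, ht⟩ := dg_other hnc hpp hp
      have ht1 : orderOf t ≠ 1 := by rw [ht]; exact hr.one_lt.ne'
      have h1 := dg_adj_coprime hnil hp hr hpr hw (l := 1) (by rw [ht, pow_one])
        (dg_ne_one hxw) ht1
      have h2 := dg_adj_coprime hnil hp hr hpr hv (l := 1) (by rw [ht, pow_one])
        (dg_ne_one hyv) ht1
      exact dg_edist4
        hxw h1 (dg_symm h2) (dg_symm hyv)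
  · left
    exact dg_edist3 hxw
      (dg_adj_coprime hnil hp hq hpq hw hv (dg_ne_one hxw) (dg_ne_one hyv)) (dg_symm hyv)

theorem dg_back (hnil : Group.IsNilpotent G) (hnc : ¬ IsCyclic G)
    (hpp : ¬ IsPrimePow (Nat.card G)) {p : ℕ} (hp : p.Prime) (P : Sylow p G) {u v : G}
    (h : dgWit (P : Subgroup G) u v) : ∃ x y : DiffVertex G, ¬ (diffGraph G).edist x y ≤ 3 := by
  obtain ⟨hu, hv, huv, ho, ⟨w, hw, huw⟩, ⟨w', hw', hvw⟩⟩ := h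
  have := Fact.mk hp
  have hord : ∀ g ∈ (P : Subgroup G), ∃ k, orderOf g = p ^ k := by
    intro g hg
    obtain ⟨k, hk⟩ := IsPGroup.iff_orderOf.mp P.2 ⟨g, hg⟩
    exact ⟨k, by rw [← hk, Subgroup.orderOf_mk]⟩
  obtain ⟨k, hk⟩ := hord u hu
  obtain ⟨k', hk'⟩ := hord v hv
  obtain ⟨l, hl⟩ := hord w hw
  obtain ⟨l', hl'⟩ := hord w' hw'
  obtain ⟨a, ha, hmax⟩ := dg_max (G := G) p
  have ha1 : orderOf a ≠ 1 := by
    obtain ⟨r, hr, hpr, t, ht⟩ := dg_other hnc hpp hp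
    have := hmax t (by rw [ht]; exact (Nat.coprime_primes hp hr).mpr hpr)
    have := hr.one_lt
    omega
  have hX := dg_vertex_max hnil hp hk hl huw ha ha1
  have hY := dg_vertex_max hnil hp hk' hl' hvw ha ha1
  refine ⟨⟨u * a, _, hX⟩, ⟨v * a, _, hY⟩, ?_⟩
  have hNu : ∀ z, diffAdj (u * a) z → u ∈ Subgroup.zpowers z :=
    fun z hz => dg_nbr_max hnil hp hk ha hmax hz
  have hNv : ∀ z, diffAdj (v * a) z → v ∈ Subgroup.zpowers z :=
    fun z hz => dg_nbr_max hnil hp hk' ha hmax hz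
  have huX : u ∈ Subgroup.zpowers (u * a) :=
    (dg_join (dg_commute hnil hp hk _ a rfl ha)
      (by rw [hk]; exact Nat.Coprime.pow_left k ha)).1
  have hvY : v ∈ Subgroup.zpowers (v * a) :=
    (dg_join (dg_commute hnil hp hk' _ a rfl ha)
      (by rw [hk']; exact Nat.Coprime.pow_left k' ha)).1
  have hno : ∀ c, u ∈ Subgroup.zpowers c → v ∈ Subgroup.zpowers c → False := by
    intro c h1 h2
    apply huv
    apply le_antisymm
    · exact Subgroup.zpowers_le.mpr (dg_key h1 h2 (by rw [ho]))
    · exact Subgroup.zpowers_le.mpr (dg_key h2 h1 (by rw [ho]))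
  intro hd
  have hne : (diffGraph G).edist ⟨u * a, _, hX⟩ ⟨v * a, _, hY⟩ ≠ ⊤ := by
    intro h; rw [h] at hd; exact absurd hd (by decide)
  obtain ⟨W, hW⟩ := SimpleGraph.exists_walk_of_edist_ne_top hne
  rw [← hW] at hd
  have hlen : W.length ≤ 3 := by exact_mod_cast hd
  clear hW hd hne
  generalize hXX : (⟨u * a, _, hX⟩ : DiffVertex G) = X at W
  generalize hYY : (⟨v * a, _, hY⟩ : DiffVertex G) = Y at W
  have eX : X.1 = u * a := by rw [← hXX]
  have eY : Y.1 = v * a := by rw [← hYY]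
  rw [← eX] at hNu huX
  rw [← eY] at hNv hvY
  cases W with
  | nil => exact hno _ huX hvY
  | cons e1 W =>
    rw [dg_graph_adj] at e1
    cases W with
    | nil => exact hno _ (hNu _ e1) hvY
    | cons e2 W =>
      rw [dg_graph_adj] at e2
      cases W with
      | nil => exact hno _ (hNu _ e1) (hNv _ (dg_symm e2))
      | cons e3 W =>
        rw [dg_graph_adj] at e3
        cases W with
        | nil =>
          obtain ⟨⟨c, h1, h2⟩, -⟩ := dg_adj_iff.mp e2
          exact hno c (Subgroup.zpowers_le.mpr h1 (hNu _ e1))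
            (Subgroup.zpowers_le.mpr h2 (hNv _ (dg_symm e3)))
        | cons e4 W =>
          simp only [SimpleGraph.Walk.length_cons] at hlen
          omega

end nil

/-- Lemma 5.7 (first part): for a finite non-cyclic nilpotent group `G` whose order is
not a prime power, `diam(𝒟(G)) = 4` iff some Sylow `p`-subgroup `P` of `G` contains two
distinct cyclic subgroups `⟨u⟩ ≠ ⟨v⟩` of the same order, neither of which is a maximal
cyclic subgroup of `P`. -/
theorem nilpotent_diffGraph_diam_eq_four_iff
    (G : Type*) [Group G] [Finite G] (hnil : Group.IsNilpotent G)
    (hnc : ¬ IsCyclic G) (hpp : ¬ IsPrimePow (Nat.card G)) :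
    (diffGraph G).diam = 4 ↔
      ∃ (p : ℕ), p.Prime ∧ ∃ (P : Sylow p G) (u v : G),
        u ∈ (P : Subgroup G) ∧ v ∈ (P : Subgroup G) ∧
        Subgroup.zpowers u ≠ Subgroup.zpowers v ∧ orderOf u = orderOf v ∧
        (∃ w ∈ (P : Subgroup G), Subgroup.zpowers u < Subgroup.zpowers w) ∧
        (∃ w ∈ (P : Subgroup G), Subgroup.zpowers v < Subgroup.zpowers w) := by
  constructor
  · intro hd
    have htop := SimpleGraph.ediam_ne_top_of_diam_ne_zero (G := diffGraph G) (by omega)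
    by_contra hcon
    have hle : (diffGraph G).ediam ≤ 3 := by
      apply SimpleGraph.ediam_le_of_edist_le
      intro x y
      rcases dg_main hnil hnc hpp x y with h | ⟨-, h⟩
      · exact h
      · exact absurd h hcon
    have : (diffGraph G).diam ≤ 3 := ENat.toNat_le_of_le_natCast hle
    omega
  · rintro ⟨p, hp, P, u, v, h⟩
    obtain ⟨x, y, hxy⟩ := dg_back hnil hnc hpp hp P h
    have hle : (diffGraph G).ediam ≤ 4 := by
      apply SimpleGraph.ediam_le_of_edist_le
      intro x y
      rcases dg_main hnil hnc hpp x y with h | ⟨h, -⟩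
      · exact h.trans (by norm_num)
      · exact h
    have hne : (diffGraph G).ediam ≠ ⊤ := by
      intro h; rw [h] at hle; exact absurd hle (by decide)
    have h4 : (diffGraph G).diam ≤ 4 := ENat.toNat_le_of_le_natCast hle
    have h3 : ¬ (diffGraph G).diam ≤ 3 := by
      intro h
      apply hxy
      refine SimpleGraph.edist_le_ediam.trans ?_
      rw [← ENat.natCast_toNat hne]
      exact_mod_cast h
    omega
end
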